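/- Let c ∈ [nπ/2, (n+1)π/2), let D ⊂ ℝⁿ be a bounded domain, I ⊂ ℝ an open interval, and u ∈ ℱ_c(I × D). Then for any precompact open subsets I' ⊂ I and D' ⊂ D there exists a sequence (u_k)_{k∈ℕ} of smooth functions on I' × D' with u_k ∈ ℱ_c(I' × D') for every k, such that (u_k) is strictly decreasing and converges pointwise to u on I' × D'. -/

import Mathlib

open Real Filter Matrix

noncomputable section

/-- The Hessian matrix of a function `v : ℝ^m → ℝ` at `x`. -/
def hessianMatrix {m : ℕ} (v : (Fin m → ℝ) → ℝ) (x : Fin m → ℝ) :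
    Matrix (Fin m) (Fin m) ℝ :=
  Matrix.of fun i j => iteratedFDeriv ℝ 2 v x ![Pi.single i 1, Pi.single j 1]

/-- The lifted Lagrangian angle θ̃(A) = ∑ arctan λ_j(A) of a real symmetric matrix. -/
def liftedAngle {m : ℕ} (A : Matrix (Fin m) (Fin m) ℝ) : ℝ :=
  if h : A.IsHermitian then ∑ j, Real.arctan (h.eigenvalues j) else 0

/-- The Harvey–Lawson branches `F_c` of the special Lagrangian subequation. -/
def Fc (m : ℕ) (c : ℝ) : Set (Matrix (Fin m) (Fin m) ℝ) :=
  {A | A.IsSymm ∧ c ≤ liftedAngle A}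

/-- `I_n = diag(0,1,…,1)` as a complex `(n+1)×(n+1)` matrix. -/
def Inmat (n : ℕ) : Matrix (Fin (n+1)) (Fin (n+1)) ℂ :=
  Matrix.diagonal fun i => if i = 0 then 0 else 1

/-- The complex matrix `I_n + i A`. -/
def cmat {n : ℕ} (A : Matrix (Fin (n+1)) (Fin (n+1)) ℝ) :
    Matrix (Fin (n+1)) (Fin (n+1)) ℂ :=
  Inmat n + Complex.I • A.map (fun a => (a : ℂ))

open Classical in
/-- The lifted space-time Lagrangian angle Θ̃, summing `Complex.arg` (with values in
`(-π, π]`) over the roots (with multiplicity) of the characteristic polynomial of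
`I_n + i A`, shifted by `π/2` over the singular set `S = {det (I_n + iA) = 0}` where only
the nonzero roots are counted. -/
def spaceTimeAngle {n : ℕ} (A : Matrix (Fin (n+1)) (Fin (n+1)) ℝ) : ℝ :=
  if (cmat A).det = 0 then
    π / 2 + ((((cmat A).charpoly.roots).filter (fun z => z ≠ 0)).map Complex.arg).sum
  else (((cmat A).charpoly.roots).map Complex.arg).sum

/-- The degenerate special Lagrangian subequation `ℱ_c ⊂ Sym(ℝ^{n+1})`. -/
def calF (n : ℕ) (c : ℝ) : Set (Matrix (Fin (n+1)) (Fin (n+1)) ℝ) :=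
  {A | A.IsSymm ∧ c ≤ spaceTimeAngle A}

/-- Interior of a set of symmetric matrices, relative to the symmetric matrices. -/
def symInterior {m : ℕ} (F : Set (Matrix (Fin m) (Fin m) ℝ)) :
    Set (Matrix (Fin m) (Fin m) ℝ) :=
  {A | A.IsSymm ∧ ∀ᶠ B in nhds A, B.IsSymm → B ∈ F}

/-- The dual subequation `F̃ = (−Int F)ᶜ` (within the symmetric matrices). -/
def dualSub {m : ℕ} (F : Set (Matrix (Fin m) (Fin m) ℝ)) :
    Set (Matrix (Fin m) (Fin m) ℝ) :=
  {A | A.IsSymm ∧ -A ∉ symInterior F}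

/-- An `EReal`-valued (i.e. `[−∞,∞)`-valued) function is subaffine on `U` if, for every
affine function `a` and compact `K ⊆ U`, `u ≤ a` on `∂K` implies `u ≤ a` on `K`. -/
def IsSubaffine {m : ℕ} (U : Set (Fin m → ℝ)) (u : (Fin m → ℝ) → EReal) : Prop :=
  ∀ (a : (Fin m → ℝ) →ᵃ[ℝ] ℝ) (K : Set (Fin m → ℝ)), IsCompact K → K ⊆ U →
    (∀ x ∈ frontier K, u x ≤ (a x : EReal)) → ∀ x ∈ K, u x ≤ (a x : EReal)

/-- `u` is of type `F` on `U` (i.e. `u ∈ F(U)`): `u` is `[−∞,∞)`-valued, upper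
semicontinuous on `U`, and `u + v` is subaffine on `U` for every `C²` function `v`
whose Hessian lies in the dual subequation `F̃` at every point of `U`. -/
def IsTypeF {m : ℕ} (F : Set (Matrix (Fin m) (Fin m) ℝ)) (U : Set (Fin m → ℝ))
    (u : (Fin m → ℝ) → EReal) : Prop :=
  (∀ x ∈ U, u x ≠ ⊤) ∧ UpperSemicontinuousOn u U ∧
    ∀ v : (Fin m → ℝ) → ℝ, ContDiffOn ℝ 2 v U →
      (∀ x ∈ U, hessianMatrix v x ∈ dualSub F) →
      IsSubaffine U (fun x => u x + ((v x : ℝ) : EReal))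

/-- The lower-right `n×n` block `A⁺` of an `(n+1)×(n+1)` matrix. -/
def Aplus {n : ℕ} (A : Matrix (Fin (n+1)) (Fin (n+1)) ℝ) : Matrix (Fin n) (Fin n) ℝ :=
  Matrix.of fun i j => A i.succ j.succ

end

noncomputable def argsum {N : ℕ} (T : Matrix (Fin N) (Fin N) ℂ) : ℝ :=
  (T.charpoly.roots.map Complex.arg).sum

lemma exists_roots {N : ℕ} (T : Matrix (Fin N) (Fin N) ℂ) :
    ∃ z : Fin N → ℂ, T.charpoly = ∏ i, (Polynomial.X - Polynomial.C (z i)) := by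
  have hs : T.charpoly.Splits := IsAlgClosed.splits _
  have h1 := hs.eq_prod_roots_of_monic (charpoly_monic T)
  have hcard : T.charpoly.roots.card = N := by
    rw [← hs.natDegree_eq_card_roots]; simp
  obtain ⟨l, hl⟩ := Quot.exists_rep T.charpoly.roots
  have hlen : l.length = N := by rw [← hcard, ← hl]; rfl
  subst hlen
  refine ⟨fun i => l.get i, ?_⟩
  rw [h1, ← hl]
  rw [← List.prod_ofFn]
  have : List.ofFn (fun i => Polynomial.X - Polynomial.C (l.get i)) = l.map (fun a => Polynomial.X - Polynomial.C a) := by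
    apply List.ext_get <;> simp
  rw [this]
  simp

lemma roots_of_prod {N : ℕ} {T : Matrix (Fin N) (Fin N) ℂ} {z : Fin N → ℂ}
    (h : T.charpoly = ∏ i, (Polynomial.X - Polynomial.C (z i))) :
    T.charpoly.roots = Finset.univ.val.map z := by
  rw [h]
  have := Polynomial.roots_multiset_prod_X_sub_C ((Finset.univ : Finset (Fin N)).val.map z)
  rw [Multiset.map_map] at this
  exact this

lemma argsum_of_prod {N : ℕ} (T : Matrix (Fin N) (Fin N) ℂ) (z : Fin N → ℂ)
    (h : T.charpoly = ∏ i, (Polynomial.X - Polynomial.C (z i))) : argsum T = ∑ i, Complex.arg (z i) := by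
  unfold argsum
  rw [roots_of_prod h, Multiset.map_map]
  rfl

lemma exists_eigvec {N : ℕ} {T : Matrix (Fin N) (Fin N) ℂ} {z : ℂ} (hz : z ∈ T.charpoly.roots) :
    ∃ v : Fin N → ℂ, v ≠ 0 ∧ T *ᵥ v = z • v := by
  have h0 : T.charpoly.eval z = 0 := (Polynomial.mem_roots'.1 hz).2
  rw [eval_charpoly] at h0
  obtain ⟨v, hv, h⟩ := exists_mulVec_eq_zero_iff.2 h0
  refine ⟨v, hv, ?_⟩
  rw [sub_mulVec, sub_eq_zero] at h
  rw [← h]; ext i; simp [Matrix.scalar_apply, mulVec_diagonal]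

lemma roots_bound {N : ℕ} (T : Matrix (Fin N) (Fin N) ℂ) (z : ℂ) (hz : z ∈ T.charpoly.roots) (C : ℝ)
    (hC : ∀ i j, ‖T i j‖ ≤ C) : ‖z‖ ≤ N * C := by
  obtain ⟨v, hv, h⟩ := exists_eigvec hz
  have hpos : 0 < ‖v‖ := norm_pos_iff.2 hv
  have hN : 0 ≤ (N:ℝ) * C := by
    rcases Nat.eq_zero_or_pos N with h0 | h0
    · simp [h0]
    · have := (norm_nonneg _).trans (hC ⟨0, h0⟩ ⟨0, h0⟩)
      positivity
  have h2 : ‖T *ᵥ v‖ ≤ (N * C) * ‖v‖ := by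
    refine (pi_norm_le_iff_of_nonneg (by positivity)).2 fun i => ?_
    unfold mulVec dotProduct
    refine (norm_sum_le _ _).trans ?_
    calc ∑ j, ‖T i j * v j‖ ≤ ∑ j : Fin N, C * ‖v‖ := by
          refine Finset.sum_le_sum fun j _ => ?_
          rw [norm_mul]
          exact mul_le_mul (hC i j) (norm_le_pi_norm v j) (norm_nonneg _) ((norm_nonneg _).trans (hC i j))
      _ = _ := by simp; ring
  rw [h, norm_smul] at h2
  exact le_of_mul_le_mul_right h2 hpos

lemma argsum_continuousAt {N : ℕ} (T : Matrix (Fin N) (Fin N) ℂ)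
    (hT : ∀ z ∈ T.charpoly.roots, z ∈ Complex.slitPlane) : ContinuousAt argsum T := by
  unfold ContinuousAt
  have hcount : (nhds T).IsCountablyGenerated := by
    have : FirstCountableTopology (Fin N → Fin N → ℂ) := inferInstance
    exact this.nhds_generated_countable T
  refine tendsto_of_seq_tendsto fun x hx => tendsto_of_subseq_tendsto fun ns hns => ?_
  have hy : Tendsto (fun k => x (ns k)) atTop (nhds T) := hx.comp hns
  choose z hz using fun k => exists_roots (x (ns k))
  have hent : ∀ i j, Tendsto (fun k => x (ns k) i j) atTop (nhds (T i j)) := fun i j =>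
    ((continuous_id.matrix_elem i j).tendsto T).comp hy
  have hb : ∀ᶠ k in atTop, ∀ i j, ‖x (ns k) i j‖ ≤ (∑ i, ∑ j, ‖T i j‖) + 1 := by
    rw [eventually_all]; intro i; rw [eventually_all]; intro j
    have h1 : ‖T i j‖ < (∑ i, ∑ j, ‖T i j‖) + 1 := by
      have : ‖T i j‖ ≤ ∑ j, ‖T i j‖ := Finset.single_le_sum (f := fun j => ‖T i j‖) (fun _ _ => norm_nonneg _) (Finset.mem_univ j)
      have h2 : ∑ j, ‖T i j‖ ≤ ∑ i, ∑ j, ‖T i j‖ := Finset.single_le_sum (f := fun i => ∑ j, ‖T i j‖) (fun _ _ => Finset.sum_nonneg fun _ _ => norm_nonneg _) (Finset.mem_univ i)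
      linarith
    exact ((hent i j).norm.eventually (gt_mem_nhds h1)).mono fun _ h => h.le
  set R : ℝ := N * ((∑ i, ∑ j, ‖T i j‖) + 1)
  have hR : ∀ᶠ k in atTop, z k ∈ Metric.closedBall (0 : Fin N → ℂ) R := by
    filter_upwards [hb] with k hk
    rw [mem_closedBall_zero_iff]
    refine (pi_norm_le_iff_of_nonneg ?_).2 fun i => ?_
    · positivity
    · exact roots_bound _ _ (by rw [roots_of_prod (hz k)]; simp) _ hk
  obtain ⟨zs, -, ms, hms, hlim⟩ := (isCompact_closedBall (0 : Fin N → ℂ) R).tendsto_subseq' hR.frequently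
  refine ⟨ms, ?_⟩
  have hlimi : ∀ i, Tendsto (fun k => z (ms k) i) atTop (nhds (zs i)) := fun i =>
    ((continuous_apply i).tendsto zs).comp hlim
  have hchar : T.charpoly = ∏ i, (Polynomial.X - Polynomial.C (zs i)) := by
    apply Polynomial.funext
    intro w
    have h1 : Tendsto (fun k => (x (ns (ms k))).charpoly.eval w) atTop (nhds (T.charpoly.eval w)) := by
      simp only [eval_charpoly]
      have hc : Continuous fun M : Matrix (Fin N) (Fin N) ℂ => (Matrix.scalar (Fin N) w - M).det := by
        exact (continuous_const.sub continuous_id).matrix_det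
      exact (hc.tendsto T).comp (hy.comp hms.tendsto_atTop)
    have h2 : Tendsto (fun k => (x (ns (ms k))).charpoly.eval w) atTop
        (nhds ((∏ i, (Polynomial.X - Polynomial.C (zs i))).eval w)) := by
      simp only [hz, Polynomial.eval_prod, Polynomial.eval_sub, Polynomial.eval_X, Polynomial.eval_C]
      exact tendsto_finsetProd _ fun i _ => tendsto_const_nhds.sub (hlimi i)
    exact tendsto_nhds_unique h1 h2
  rw [argsum_of_prod T zs hchar]
  refine Tendsto.congr (fun k => (argsum_of_prod _ _ (hz (ms k))).symm) ?_
  refine tendsto_finset_sum _ fun i _ => ?_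
  have : zs i ∈ Complex.slitPlane := hT _ (by rw [roots_of_prod hchar]; simp)
  exact (Complex.continuousAt_arg this).tendsto.comp (hlimi i)

lemma herm_im_zero {N : ℕ} {A : Matrix (Fin N) (Fin N) ℝ} (hA : A.IsSymm) (v : Fin N → ℂ) :
    (∑ i, ∑ j, star (v i) * ((A i j : ℂ) * v j)).im = 0 := by
  rw [← Complex.conj_eq_iff_im]
  simp only [map_sum, map_mul, Complex.conj_ofReal, Complex.star_def, Complex.conj_conj]
  rw [Finset.sum_comm]
  refine Finset.sum_congr rfl fun i _ => Finset.sum_congr rfl fun j _ => ?_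
  rw [hA.apply i j]
  ring

lemma cmat_re {n : ℕ} {A : Matrix (Fin (n+1)) (Fin (n+1)) ℝ} (hA : A.IsSymm) (v : Fin (n+1) → ℂ) :
    (star v ⬝ᵥ (cmat A *ᵥ v)).re = ∑ i : Fin n, Complex.normSq (v i.succ) := by
  have h1 : star v ⬝ᵥ (cmat A *ᵥ v) = (∑ i : Fin n, star (v i.succ) * v i.succ) +
      Complex.I * ∑ i, ∑ j, star (v i) * ((A i j : ℂ) * v j) := by
    unfold cmat
    rw [add_mulVec, dotProduct_add, smul_mulVec, dotProduct_smul, smul_eq_mul]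
    congr 1
    · simp [dotProduct, Inmat, mulVec_diagonal, Fin.sum_univ_succ]
    · congr 1
      simp [dotProduct, mulVec, Finset.mul_sum]
  rw [h1]
  simp only [Complex.add_re, Complex.mul_re, Complex.I_re, Complex.I_im, herm_im_zero hA]
  simp [Complex.normSq_apply]

lemma cmat_root_re {n : ℕ} {A : Matrix (Fin (n+1)) (Fin (n+1)) ℝ} (hA : A.IsSymm) {z : ℂ}
    (hz : z ∈ (cmat A).charpoly.roots) : 0 ≤ z.re := by
  obtain ⟨v, hv, h⟩ := exists_eigvec hz
  have h1 := cmat_re hA v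
  rw [h, dotProduct_smul, smul_eq_mul] at h1
  have h2 : star v ⬝ᵥ v = ((∑ i, Complex.normSq (v i) : ℝ) : ℂ) := by
    simp [dotProduct, Complex.normSq_eq_conj_mul_self]
  rw [h2, Complex.re_mul_ofReal] at h1
  have h3 : 0 < ∑ i, Complex.normSq (v i) := by
    obtain ⟨i, hi⟩ := Function.ne_iff.1 hv
    exact Finset.sum_pos' (fun _ _ => Complex.normSq_nonneg _) ⟨i, Finset.mem_univ _, Complex.normSq_pos.2 hi⟩
  have h4 : 0 ≤ ∑ i : Fin n, Complex.normSq (v i.succ) := Finset.sum_nonneg fun _ _ => Complex.normSq_nonneg _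
  by_contra hneg
  push Not at hneg
  nlinarith

lemma cmat_det_zero {n : ℕ} {A : Matrix (Fin (n+1)) (Fin (n+1)) ℝ} (hA : A.IsSymm)
    (h : (cmat A).det = 0) : ∀ i, A i 0 = 0 := by
  obtain ⟨v, hv, h⟩ := exists_mulVec_eq_zero_iff.2 h
  have h1 := cmat_re hA v
  rw [h] at h1
  simp only [dotProduct_zero, Complex.zero_re] at h1
  have h2 : ∀ i : Fin n, v i.succ = 0 := fun i => by
    have := (Finset.sum_eq_zero_iff_of_nonneg (fun (i : Fin n) _ => Complex.normSq_nonneg (v i.succ))).1 h1.symm i (Finset.mem_univ _)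
    exact Complex.normSq_eq_zero.1 this
  have h0 : v 0 ≠ 0 := by
    intro h0; apply hv; ext i; refine Fin.cases ?_ (fun i => ?_) i
    · simp [h0]
    · simp [h2]
  intro i
  have h3 := congrFun h i
  simp only [mulVec, dotProduct, Fin.sum_univ_succ, h2, mul_zero, Finset.sum_const_zero, add_zero, Pi.zero_apply, mul_eq_zero, h0, or_false] at h3
  have h4 : Inmat n i 0 = 0 := by
    unfold Inmat; rw [diagonal_apply]; split_ifs <;> simp_all
  simpa [cmat, h4] using h3

lemma spaceTimeAngle_of_ne {n : ℕ} {A : Matrix (Fin (n+1)) (Fin (n+1)) ℝ} (h : (cmat A).det ≠ 0) :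
    spaceTimeAngle A = argsum (cmat A) := by
  unfold spaceTimeAngle argsum; rw [if_neg h]

lemma cmat_slit {n : ℕ} {A : Matrix (Fin (n+1)) (Fin (n+1)) ℝ} (hA : A.IsSymm) (h : (cmat A).det ≠ 0)
    (z : ℂ) (hz : z ∈ (cmat A).charpoly.roots) : z ∈ Complex.slitPlane := by
  have h1 := cmat_root_re hA hz
  rw [Complex.mem_slitPlane_iff]
  by_contra hh
  push Not at hh
  have hz0 : z = 0 := Complex.ext (le_antisymm hh.1 h1) hh.2
  apply h
  rw [det_eq_prod_roots_charpoly]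
  exact Multiset.prod_eq_zero (hz0 ▸ hz)

/-- block matrices on `Fin (n+1)` -/
def blk {R : Type*} {n : ℕ} (a : R) (b b' : Fin n → R) (S : Matrix (Fin n) (Fin n) R) :
    Matrix (Fin (n+1)) (Fin (n+1)) R :=
  Matrix.of (Fin.cons (Fin.cons a b) (fun i => Fin.cons (b' i) (S i)))

section blk
variable {R : Type*} {n : ℕ} (a : R) (b b' : Fin n → R) (S : Matrix (Fin n) (Fin n) R)
@[simp] lemma blk_00 : blk a b b' S 0 0 = a := rfl
@[simp] lemma blk_0s (j : Fin n) : blk a b b' S 0 j.succ = b j := rfl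
@[simp] lemma blk_s0 (i : Fin n) : blk a b b' S i.succ 0 = b' i := rfl
@[simp] lemma blk_ss (i j : Fin n) : blk a b b' S i.succ j.succ = S i j := rfl

lemma blk_ext {A B : Matrix (Fin (n+1)) (Fin (n+1)) R} (h0 : A 0 0 = B 0 0)
    (h1 : ∀ j : Fin n, A 0 j.succ = B 0 j.succ) (h2 : ∀ i : Fin n, A i.succ 0 = B i.succ 0)
    (h3 : ∀ i j : Fin n, A i.succ j.succ = B i.succ j.succ) : A = B := by
  ext i j
  refine Fin.cases ?_ (fun i => ?_) i <;> refine Fin.cases ?_ (fun j => ?_) j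
  · exact h0
  · exact h1 _
  · exact h2 _
  · exact h3 _ _

lemma blk_det [CommRing R] : (blk a 0 b' S).det = a * S.det := by
  rw [det_succ_row_zero, Fin.sum_univ_succ]
  simp
  congr 1

lemma blk_charpoly [CommRing R] : (blk a 0 0 S).charpoly = (Polynomial.X - Polynomial.C a) * S.charpoly := by
  unfold charpoly
  rw [← blk_det (b' := 0)]
  congr 1
  apply blk_ext <;> intros <;> simp [charmatrix_apply, diagonal_apply, (Fin.succ_ne_zero _).symm]

end blk

lemma arg_one_add (x : ℝ) : Complex.arg (1 + Complex.I * x) = Real.arctan x := by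
  rw [Complex.arg_of_re_nonneg (by simp), Real.arctan_eq_arcsin]
  congr 1
  have : ‖(1 + Complex.I * x : ℂ)‖ = √(1 + x^2) := by
    rw [Complex.norm_def, Complex.normSq_apply]; congr 1; simp; ring
  rw [this]; simp

lemma charpoly_one_add {n : ℕ} {S : Matrix (Fin n) (Fin n) ℝ} (hS : S.IsHermitian) :
    (1 + Complex.I • S.map (fun a => (a : ℂ))).charpoly =
      ∏ j, (Polynomial.X - Polynomial.C (1 + Complex.I * (hS.eigenvalues j : ℂ))) := by
  apply Polynomial.funext
  intro w
  rw [eval_charpoly, Polynomial.eval_prod]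
  have h1 : (S.map (fun a => (a : ℂ))).charpoly = ∏ j, (Polynomial.X - Polynomial.C ((hS.eigenvalues j : ℝ) : ℂ)) := by
    have := charpoly_map S (algebraMap ℝ ℂ)
    rw [hS.charpoly_eq, Polynomial.map_prod] at this
    simpa using this
  have h2 := congrArg (Polynomial.eval ((w - 1) / Complex.I)) h1
  rw [eval_charpoly, Polynomial.eval_prod] at h2
  have h3 : Matrix.scalar (Fin n) w - (1 + Complex.I • S.map (fun a => (a : ℂ))) =
      Complex.I • (Matrix.scalar (Fin n) ((w-1)/Complex.I) - S.map (fun a => (a : ℂ))) := by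
    ext i j
    by_cases hij : i = j
    · subst hij; simp; field_simp; ring_nf; rw [Complex.I_sq]; ring
    · simp [hij]
  rw [h3, det_smul, h2, ← Finset.card_univ, ← Finset.prod_const, ← Finset.prod_mul_distrib]
  refine Finset.prod_congr rfl fun j _ => ?_
  simp only [Polynomial.eval_sub, Polynomial.eval_X, Polynomial.eval_C]
  field_simp
  ring

lemma cmat_blk {n : ℕ} (a : ℝ) (b : Fin n → ℝ) (S : Matrix (Fin n) (Fin n) ℝ) :
    cmat (blk a b b S) = blk (Complex.I * a) (fun i => Complex.I * b i) (fun i => Complex.I * b i)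
      (1 + Complex.I • S.map (fun a => (a : ℂ))) := by
  apply blk_ext <;> intros <;> simp [cmat, Inmat, diagonal_apply, one_apply, (Fin.succ_ne_zero _).symm]

lemma argsum_blk0 {n : ℕ} (a : ℝ) (S : Matrix (Fin n) (Fin n) ℝ) (hS : S.IsSymm) :
    ((cmat (blk a 0 0 S)).charpoly.roots) = {Complex.I * (a : ℂ)} +
      (1 + Complex.I • S.map (fun a => (a : ℂ))).charpoly.roots := by
  have := cmat_blk a 0 S
  simp only [Pi.zero_apply, Complex.ofReal_zero, mul_zero] at this
  rw [this]
  have h2 := blk_charpoly (Complex.I * a) (1 + Complex.I • S.map (fun a => (a : ℂ)))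
  change (blk (Complex.I * a) (fun _ => 0) (fun _ => 0) _).charpoly = _ at h2
  rw [h2, Polynomial.roots_mul, Polynomial.roots_X_sub_C]
  exact mul_ne_zero (Polynomial.X_sub_C_ne_zero _) (charpoly_monic _).ne_zero

lemma argsum_one_add {n : ℕ} {S : Matrix (Fin n) (Fin n) ℝ} (hS : S.IsSymm) :
    argsum (1 + Complex.I • S.map (fun a => (a : ℂ))) = liftedAngle S := by
  have hS' : S.IsHermitian := by rw [IsHermitian, conjTranspose_eq_transpose_of_trivial]; exact hS
  rw [argsum_of_prod _ _ (charpoly_one_add hS'), liftedAngle, dif_pos hS']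
  simp [arg_one_add]

lemma one_add_roots_ne {n : ℕ} {S : Matrix (Fin n) (Fin n) ℝ} (hS : S.IsSymm) (z : ℂ)
    (hz : z ∈ (1 + Complex.I • S.map (fun a => (a : ℂ))).charpoly.roots) : z ≠ 0 := by
  have hS' : S.IsHermitian := by rw [IsHermitian, conjTranspose_eq_transpose_of_trivial]; exact hS
  rw [roots_of_prod (charpoly_one_add hS')] at hz
  simp only [Multiset.mem_map] at hz
  obtain ⟨i, -, rfl⟩ := hz
  intro h
  have := congrArg Complex.re h
  simp at this

lemma blk_symm {n : ℕ} (a : ℝ) (b : Fin n → ℝ) {S : Matrix (Fin n) (Fin n) ℝ} (hS : S.IsSymm) :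
    (blk a b b S).IsSymm := by
  apply blk_ext <;> intros <;> simp [transpose_apply, hS.apply]

lemma angle_singular {n : ℕ} {S : Matrix (Fin n) (Fin n) ℝ} (hS : S.IsSymm) :
    spaceTimeAngle (blk 0 0 0 S) = π / 2 + liftedAngle S := by
  have hr := argsum_blk0 0 S hS
  have hd : (cmat (blk 0 0 0 S)).det = 0 := by
    rw [det_eq_prod_roots_charpoly, hr]; simp
  unfold spaceTimeAngle
  rw [if_pos hd, hr, ← argsum_one_add hS, argsum]
  congr 3
  rw [Multiset.filter_add, Multiset.filter_eq_nil.2 (by simp), zero_add, Multiset.filter_eq_self.2]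
  intro z hz
  exact one_add_roots_ne hS z hz

lemma path_det {n : ℕ} {a : ℝ} (ha : a ≠ 0) (b : Fin n → ℝ) (S : Matrix (Fin n) (Fin n) ℝ) (r : ℝ) :
    (cmat (blk a (r • b) (r • b) (S + (r^2/a) • vecMulVec b b))).det =
      (cmat (blk a 0 0 S)).det := by
  have h : cmat (blk a (r • b) (r • b) (S + (r^2/a) • vecMulVec b b)) =
      blk 1 0 (fun i => ((r / a * b i : ℝ) : ℂ)) 1 * cmat (blk a 0 0 S) *
        (blk 1 0 (fun i => ((r / a * b i : ℝ) : ℂ)) 1)ᵀ := by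
    have hac : (a : ℂ) ≠ 0 := by exact_mod_cast ha
    rw [cmat_blk, cmat_blk]
    apply blk_ext <;> intros <;> simp [mul_apply, Fin.sum_univ_succ, one_apply, vecMulVec_apply] <;>
      field_simp
    ring
  rw [h, det_mul, det_mul, det_transpose, blk_det]
  simp

lemma exp_argsum {N : ℕ} (T : Matrix (Fin N) (Fin N) ℂ) (hT : T.det ≠ 0) :
    Complex.exp (argsum T * Complex.I) = T.det / ‖T.det‖ := by
  obtain ⟨z, hz⟩ := exists_roots T
  have hdet : T.det = ∏ i, z i := by
    rw [det_eq_prod_roots_charpoly, roots_of_prod hz]; rfl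
  have hz0 : ∀ i, z i ≠ 0 := by
    rw [hdet] at hT
    intro i; exact Finset.prod_ne_zero_iff.1 hT i (Finset.mem_univ _)
  rw [argsum_of_prod T z hz, hdet, norm_prod]
  push_cast
  rw [Finset.sum_mul, Complex.exp_sum, ← Finset.prod_div_distrib]
  refine Finset.prod_congr rfl fun i _ => ?_
  rw [eq_div_iff (by simpa using hz0 i), mul_comm]
  exact Complex.norm_mul_exp_arg_mul_I (z i)

lemma const_of_exp {g : ℝ → ℝ} (hg : Continuous g) (h : ∀ r, Complex.exp (g r * Complex.I) = Complex.exp (g 0 * Complex.I))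
    (r : ℝ) : g r = g 0 := by
  have hd : IsDiscrete (Set.range ((↑) : ℤ → ℝ)) := by
    exact Int.isClosedEmbedding_coe_real.isEmbedding.isDiscrete_range
  have := (isPreconnected_univ (α := ℝ)).constant_of_mapsTo hd (f := fun r => (g r - g 0) / (2 * π))
    (by fun_prop) (fun r _ => by
      obtain ⟨k, hk⟩ := Complex.exp_eq_exp_iff_exists_int.1 (h r)
      refine ⟨k, ?_⟩
      have h2 := congrArg Complex.im hk
      simp at h2
      have := pi_pos
      field_simp
      linarith) (Set.mem_univ r) (Set.mem_univ 0)
  have hp := pi_pos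
  simp only [sub_self, zero_div, div_eq_zero_iff] at this
  rcases this with h | h
  · linarith
  · linarith

lemma blk0_det_ne {n : ℕ} {a : ℝ} (ha : a ≠ 0) {S : Matrix (Fin n) (Fin n) ℝ} (hS : S.IsSymm) (b : Fin n → ℝ) :
    (cmat (blk a b b S)).det ≠ 0 := fun h => ha (cmat_det_zero (blk_symm a b hS) h 0)

lemma path_symm {n : ℕ} (t : ℝ) (b : Fin n → ℝ) {S : Matrix (Fin n) (Fin n) ℝ} (hS : S.IsSymm) :
    (S + t • vecMulVec b b).IsSymm := by
  ext i j; simp only [transpose_apply, Matrix.add_apply, Matrix.smul_apply, vecMulVec_apply, hS.apply, smul_eq_mul]; ring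

lemma cmat_continuous {n : ℕ} : Continuous (cmat (n := n)) := by
  unfold cmat
  refine continuous_matrix fun i j => ?_
  have : Continuous fun A : Matrix (Fin (n+1)) (Fin (n+1)) ℝ => A i j := continuous_id.matrix_elem i j
  simp only [Matrix.add_apply, Matrix.smul_apply, Matrix.map_apply, smul_eq_mul]
  fun_prop

lemma angle_regular {n : ℕ} {a : ℝ} (ha : a ≠ 0) (b : Fin n → ℝ) {S : Matrix (Fin n) (Fin n) ℝ} (hS : S.IsSymm) :
    spaceTimeAngle (blk a b b (S + (1/a) • vecMulVec b b)) = Complex.arg (Complex.I * a) + liftedAngle S := by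
  rw [spaceTimeAngle_of_ne (blk0_det_ne ha (path_symm _ _ hS) _)]
  set M : ℝ → Matrix (Fin (n+1)) (Fin (n+1)) ℝ := fun r => blk a (r • b) (r • b) (S + (r^2/a) • vecMulVec b b) with hM
  have hMs : ∀ r, (M r).IsSymm := fun r => blk_symm _ _ (path_symm _ _ hS)
  have hMd : ∀ r, (cmat (M r)).det ≠ 0 := fun r => blk0_det_ne ha (path_symm _ _ hS) _
  have hMc : Continuous M := by
    refine continuous_matrix fun i j => ?_
    refine Fin.cases ?_ (fun i => ?_) i <;> refine Fin.cases ?_ (fun j => ?_) j <;> simp [hM] <;> fun_prop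
  have hg : Continuous fun r => argsum (cmat (M r)) := by
    rw [continuous_iff_continuousAt]
    intro r
    exact ContinuousAt.comp (f := fun r => cmat (M r)) (argsum_continuousAt _ (cmat_slit (hMs r) (hMd r))) (cmat_continuous.comp hMc).continuousAt
  have h1 := const_of_exp hg (fun r => by
    rw [exp_argsum _ (hMd r), exp_argsum _ (hMd 0)]
    simp only [hM]
    rw [path_det ha, path_det ha]) 1
  have e1 : M 1 = blk a b b (S + (1/a) • vecMulVec b b) := by simp [hM]
  have e0 : M 0 = blk a 0 0 S := by simp [hM]
  simp only [e1, e0] at h1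
  rw [h1, argsum, argsum_blk0 _ _ hS, Multiset.map_add, Multiset.sum_add, ← argsum_one_add hS]
  simp [argsum]

/-- quadratic form -/
def qf {m : ℕ} (A : Matrix (Fin m) (Fin m) ℝ) (x : Fin m → ℝ) : ℝ := x ⬝ᵥ (A *ᵥ x)

def Psd {m : ℕ} (A : Matrix (Fin m) (Fin m) ℝ) : Prop := A.IsSymm ∧ ∀ x, 0 ≤ qf A x

lemma qf_add {m : ℕ} (A B : Matrix (Fin m) (Fin m) ℝ) (x) : qf (A + B) x = qf A x + qf B x := by
  simp [qf, add_mulVec, dotProduct_add]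

lemma qf_sub {m : ℕ} (A B : Matrix (Fin m) (Fin m) ℝ) (x) : qf (A - B) x = qf A x - qf B x := by
  simp [qf, sub_mulVec, dotProduct_sub]

lemma qf_smul {m : ℕ} (t : ℝ) (A : Matrix (Fin m) (Fin m) ℝ) (x) : qf (t • A) x = t * qf A x := by
  simp [qf, smul_mulVec]

lemma qf_neg {m : ℕ} (A : Matrix (Fin m) (Fin m) ℝ) (x) : qf (-A) x = - qf A x := by
  simp [qf, neg_mulVec]

lemma qf_one {m : ℕ} (x : Fin m → ℝ) : qf 1 x = ∑ i, x i ^ 2 := by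
  simp [qf, dotProduct, sq]

lemma qf_eq_sum {m : ℕ} (A : Matrix (Fin m) (Fin m) ℝ) (x) : qf A x = ∑ i, ∑ j, x i * x j * A i j := by
  simp only [qf, dotProduct, mulVec, Finset.mul_sum]
  refine Finset.sum_congr rfl fun i _ => Finset.sum_congr rfl fun j _ => by ring

lemma qf_vecMulVec {m : ℕ} (b x : Fin m → ℝ) : qf (vecMulVec b b) x = (b ⬝ᵥ x)^2 := by
  rw [qf_eq_sum, sq, dotProduct, Finset.sum_mul_sum]
  refine Finset.sum_congr rfl fun i _ => Finset.sum_congr rfl fun j _ => by rw [vecMulVec_apply]; ring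

lemma qf_blk {n : ℕ} (a : ℝ) (b : Fin n → ℝ) (S : Matrix (Fin n) (Fin n) ℝ) (x : Fin (n+1) → ℝ) :
    qf (blk a b b S) x = a * x 0 ^ 2 + 2 * x 0 * (b ⬝ᵥ Fin.tail x) + qf S (Fin.tail x) := by
  simp only [qf_eq_sum, Fin.sum_univ_succ, blk_00, blk_0s, blk_s0, blk_ss, Finset.sum_add_distrib, dotProduct, Finset.mul_sum, Fin.tail]
  have : ∀ i, 2 * x 0 * (b i * x i.succ) = x 0 * x i.succ * b i + x i.succ * x 0 * b i := fun i => by ring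
  simp only [this, Finset.sum_add_distrib]
  ring

lemma conj_diag_eq {m : ℕ} (O S : Matrix (Fin m) (Fin m) ℝ) (i : Fin m) :
    (Oᵀ * S * O) i i = qf S (fun k => O k i) := by
  rw [qf, mul_assoc]
  simp [mul_apply, dotProduct, mulVec]

lemma exists_diag {m : ℕ} {S : Matrix (Fin m) (Fin m) ℝ} (hS : S.IsSymm) :
    ∃ (V : Matrix (Fin m) (Fin m) ℝ) (d : Fin m → ℝ), Vᵀ * V = 1 ∧ V * Vᵀ = 1 ∧
      S = V * diagonal d * Vᵀ ∧ liftedAngle S = ∑ j, Real.arctan (d j) := by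
  have hS' : S.IsHermitian := by rw [IsHermitian, conjTranspose_eq_transpose_of_trivial]; exact hS
  refine ⟨hS'.eigenvectorUnitary, hS'.eigenvalues, ?_, ?_, ?_, ?_⟩
  · have := Unitary.coe_star_mul_self hS'.eigenvectorUnitary
    rwa [star_eq_conjTranspose, conjTranspose_eq_transpose_of_trivial] at this
  · have := Unitary.coe_star_mul_self hS'.eigenvectorUnitary
    rw [star_eq_conjTranspose, conjTranspose_eq_transpose_of_trivial] at this
    exact mul_eq_one_comm.1 this
  · have := hS'.spectral_theorem
    rw [Unitary.conjStarAlgAut_apply, star_eq_conjTranspose, conjTranspose_eq_transpose_of_trivial] at this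
    exact this
  · rw [liftedAngle, dif_pos hS']

lemma qf_conj {m : ℕ} (V : Matrix (Fin m) (Fin m) ℝ) (d : Fin m → ℝ) (x : Fin m → ℝ) :
    qf (V * diagonal d * Vᵀ) x = ∑ j, d j * (Vᵀ *ᵥ x) j ^ 2 := by
  rw [qf, ← mulVec_mulVec, ← mulVec_mulVec, dotProduct_mulVec, ← mulVec_transpose]
  simp only [dotProduct, mulVec_diagonal]
  refine Finset.sum_congr rfl fun j _ => by ring

lemma norm_conj {m : ℕ} {V : Matrix (Fin m) (Fin m) ℝ} (hV : V * Vᵀ = 1) (x : Fin m → ℝ) :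
    ∑ j, (Vᵀ *ᵥ x) j ^ 2 = ∑ j, x j ^ 2 := by
  have := qf_conj V 1 x
  rw [show diagonal (1 : Fin m → ℝ) = 1 from diagonal_one, mul_one, hV, qf_one] at this
  simp [this]

lemma arctan_concave : ConcaveOn ℝ (Set.Ici 0) Real.arctan := by
  apply AntitoneOn.concaveOn_of_deriv (convex_Ici 0) continuous_arctan.continuousOn
    differentiable_arctan.differentiableOn
  intro x hx y hy hxy
  simp only [interior_Ici, Set.mem_Ioi] at hx hy
  simp only [Real.deriv_arctan]
  apply one_div_le_one_div_of_le
  · positivity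
  · nlinarith

lemma liftedAngle_le {m : ℕ} {S : Matrix (Fin m) (Fin m) ℝ} (hS : Psd S) {O : Matrix (Fin m) (Fin m) ℝ}
    (hO : Oᵀ * O = 1) : liftedAngle S ≤ ∑ i, Real.arctan ((Oᵀ * S * O) i i) := by
  obtain ⟨V, d, hV1, hV2, hSd, hang⟩ := exists_diag hS.1
  have hd : ∀ j, 0 ≤ d j := by
    intro j
    have h1 : Vᵀ * S * V = diagonal d := by
      rw [hSd]
      calc Vᵀ * (V * diagonal d * Vᵀ) * V = (Vᵀ * V) * diagonal d * (Vᵀ * V) := by simp only [mul_assoc]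
        _ = _ := by simp [hV1]
    have h2 := conj_diag_eq V S j
    rw [h1, diagonal_apply_eq] at h2
    rw [h2]; exact hS.2 _
  set P := Vᵀ * O with hP
  have hP1 : Pᵀ * P = 1 := by
    rw [hP, transpose_mul, transpose_transpose]
    calc Oᵀ * V * (Vᵀ * O) = Oᵀ * (V * Vᵀ) * O := by simp only [mul_assoc]
      _ = 1 := by rw [hV2, mul_one, hO]
  have hP2 : P * Pᵀ = 1 := mul_eq_one_comm.1 hP1
  have hcol : ∀ i, ∑ j, P j i ^ 2 = 1 := fun i => by
    have := congrFun (congrFun hP1 i) i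
    rw [mul_apply] at this
    simpa [sq] using this
  have hrow : ∀ j, ∑ i, P j i ^ 2 = 1 := fun i => by
    have := congrFun (congrFun hP2 i) i
    rw [mul_apply] at this
    simpa [sq] using this
  have hent : ∀ i, (Oᵀ * S * O) i i = ∑ j, P j i ^ 2 * d j := fun i => by
    rw [conj_diag_eq, hSd, qf_conj]
    refine Finset.sum_congr rfl fun j _ => ?_
    rw [mul_comm]; rfl
  rw [hang]
  calc ∑ j, Real.arctan (d j) = ∑ j, ∑ i, P j i ^ 2 * Real.arctan (d j) := by
        refine Finset.sum_congr rfl fun j _ => ?_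
        rw [← Finset.sum_mul, hrow, one_mul]
    _ = ∑ i, ∑ j, P j i ^ 2 * Real.arctan (d j) := Finset.sum_comm
    _ ≤ _ := by
        refine Finset.sum_le_sum fun i _ => ?_
        rw [hent]
        have := arctan_concave.le_map_sum (t := Finset.univ) (w := fun j => P j i ^ 2) (p := d)
          (fun j _ => sq_nonneg _) (hcol i) (fun j _ => hd j)
        simpa using this

lemma liftedAngle_exists {m : ℕ} {S : Matrix (Fin m) (Fin m) ℝ} (hS : S.IsSymm) :
    ∃ O : Matrix (Fin m) (Fin m) ℝ, Oᵀ * O = 1 ∧ liftedAngle S = ∑ i, Real.arctan ((Oᵀ * S * O) i i) := by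
  obtain ⟨V, d, hV1, hV2, hSd, hang⟩ := exists_diag hS
  refine ⟨V, hV1, ?_⟩
  have h1 : Vᵀ * S * V = diagonal d := by
    rw [hSd]
    calc Vᵀ * (V * diagonal d * Vᵀ) * V = (Vᵀ * V) * diagonal d * (Vᵀ * V) := by simp only [mul_assoc]
      _ = _ := by simp [hV1]
  rw [hang, h1]; simp

def Gset (m : ℕ) (c : ℝ) : Set (Matrix (Fin m) (Fin m) ℝ) :=
  {S | Psd S ∧ ∀ O : Matrix (Fin m) (Fin m) ℝ, Oᵀ * O = 1 → c ≤ ∑ i, Real.arctan ((Oᵀ * S * O) i i)}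

lemma Gset_iff {m : ℕ} {c : ℝ} {S : Matrix (Fin m) (Fin m) ℝ} (hS : Psd S) : S ∈ Gset m c ↔ c ≤ liftedAngle S := by
  constructor
  · intro h
    obtain ⟨O, hO, h2⟩ := liftedAngle_exists hS.1
    rw [h2]; exact h.2 O hO
  · intro h
    exact ⟨hS, fun O hO => h.trans (liftedAngle_le hS hO)⟩

lemma Gset_mono {m : ℕ} {c : ℝ} {S S' : Matrix (Fin m) (Fin m) ℝ} (hS : S ∈ Gset m c) (hS' : S'.IsSymm)
    (h : ∀ x, qf S x ≤ qf S' x) : S' ∈ Gset m c := by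
  refine ⟨⟨hS', fun x => (hS.1.2 x).trans (h x)⟩, fun O hO => (hS.2 O hO).trans ?_⟩
  refine Finset.sum_le_sum fun i _ => Real.arctan_mono ?_
  rw [conj_diag_eq, conj_diag_eq]; exact h _

lemma qf_continuous {m : ℕ} (x : Fin m → ℝ) : Continuous fun A : Matrix (Fin m) (Fin m) ℝ => qf A x := by
  simp only [qf_eq_sum]
  have : ∀ i j, Continuous fun A : Matrix (Fin m) (Fin m) ℝ => A i j := fun i j => continuous_id.matrix_elem i j
  fun_prop

lemma Psd_closed {m : ℕ} : IsClosed {A : Matrix (Fin m) (Fin m) ℝ | Psd A} := by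
  have h1 : IsClosed {A : Matrix (Fin m) (Fin m) ℝ | A.IsSymm} :=
    isClosed_eq (continuous_id.matrix_transpose) continuous_id
  have h2 : IsClosed {A : Matrix (Fin m) (Fin m) ℝ | ∀ x, 0 ≤ qf A x} := by
    simp only [Set.setOf_forall]
    exact isClosed_iInter fun x => isClosed_le continuous_const (qf_continuous x)
  exact h1.inter h2

lemma Gset_closed {m : ℕ} {c : ℝ} : IsClosed (Gset m c) := by
  suffices h2 : IsClosed {S : Matrix (Fin m) (Fin m) ℝ | ∀ O : Matrix (Fin m) (Fin m) ℝ, Oᵀ * O = 1 →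
      c ≤ ∑ i, Real.arctan ((Oᵀ * S * O) i i)} from
    Psd_closed.inter h2
  simp only [Set.setOf_forall]
  refine isClosed_iInter fun O => isClosed_iInter fun _ => isClosed_le continuous_const ?_
  simp only [conj_diag_eq]
  exact continuous_finset_sum _ fun i _ => continuous_arctan.comp (qf_continuous _)

lemma Psd_comb {m : ℕ} {A B : Matrix (Fin m) (Fin m) ℝ} (hA : Psd A) (hB : Psd B) {s t : ℝ} (hs : 0 ≤ s) (ht : 0 ≤ t) :
    Psd (s • A + t • B) := by
  refine ⟨(hA.1.smul s).add (hB.1.smul t), fun x => ?_⟩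
  rw [qf_add, qf_smul, qf_smul]
  have := hA.2 x; have := hB.2 x
  positivity

lemma Gset_convex {m : ℕ} {c : ℝ} : Convex ℝ (Gset m c) := by
  intro A hA B hB s t hs ht hst
  refine ⟨Psd_comb hA.1 hB.1 hs ht, fun O hO => ?_⟩
  have h1 := hA.2 O hO
  have h2 := hB.2 O hO
  calc c = s * c + t * c := by rw [← add_mul, hst, one_mul]
    _ ≤ s * (∑ i, Real.arctan ((Oᵀ * A * O) i i)) + t * (∑ i, Real.arctan ((Oᵀ * B * O) i i)) := by gcongr
    _ = ∑ i, (s * Real.arctan ((Oᵀ * A * O) i i) + t * Real.arctan ((Oᵀ * B * O) i i)) := by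
      rw [Finset.sum_add_distrib, Finset.mul_sum, Finset.mul_sum]
    _ ≤ _ := by
      refine Finset.sum_le_sum fun i _ => ?_
      simp only [conj_diag_eq, qf_add, qf_smul]
      exact arctan_concave.2 (hA.1.2 _) (hB.1.2 _) hs ht hst

lemma sum_arctan_le {n : ℕ} (d : Fin n → ℝ) (k : Fin n) :
    ∑ j, Real.arctan (d j) ≤ Real.arctan (d k) + ((n : ℝ) - 1) * π / 2 := by
  rw [← Finset.add_sum_erase _ _ (Finset.mem_univ k)]
  gcongr
  calc ∑ j ∈ Finset.univ.erase k, Real.arctan (d j) ≤ ∑ j ∈ Finset.univ.erase k, π / 2 :=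
        Finset.sum_le_sum fun j _ => (Real.arctan_lt_pi_div_two _).le
    _ = _ := by
      rw [Finset.sum_const, Finset.card_erase_of_mem (Finset.mem_univ k), Finset.card_univ, Fintype.card_fin, nsmul_eq_mul,
        Nat.cast_sub (by have := k.pos; omega)]
      push_cast; ring

lemma liftedAngle_le_top {n : ℕ} {S : Matrix (Fin n) (Fin n) ℝ} (hS : S.IsSymm) :
    liftedAngle S ≤ n * π / 2 := by
  obtain ⟨V, d, -, -, -, h⟩ := exists_diag hS
  rw [h]
  calc _ ≤ ∑ j : Fin n, π / 2 := Finset.sum_le_sum fun j _ => (Real.arctan_lt_pi_div_two _).le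
    _ = _ := by simp; ring

lemma psd_of_angle {n : ℕ} {S : Matrix (Fin n) (Fin n) ℝ} (hS : S.IsSymm)
    (h : ((n : ℝ) - 1) * π / 2 ≤ liftedAngle S) : Psd S := by
  obtain ⟨V, d, hV1, hV2, hSd, h1⟩ := exists_diag hS
  refine ⟨hS, fun x => ?_⟩
  rw [hSd, qf_conj]
  refine Finset.sum_nonneg fun j _ => mul_nonneg ?_ (sq_nonneg _)
  have := sum_arctan_le d j
  rw [← Real.arctan_nonneg]
  linarith

lemma angle_le_of_neg {n : ℕ} {S : Matrix (Fin n) (Fin n) ℝ} (hS : S.IsSymm) (x : Fin n → ℝ)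
    (h : qf S x < - ∑ i, x i ^ 2) : liftedAngle S ≤ ((n : ℝ) - 1) * π / 2 - π / 4 := by
  obtain ⟨V, d, hV1, hV2, hSd, h1⟩ := exists_diag hS
  rw [hSd, qf_conj, ← norm_conj hV2 x] at h
  have : ∃ j, d j < -1 := by
    by_contra! hh
    have : ∑ j, (-1) * (Vᵀ *ᵥ x) j ^ 2 ≤ ∑ j, d j * (Vᵀ *ᵥ x) j ^ 2 :=
      Finset.sum_le_sum fun j _ => mul_le_mul_of_nonneg_right (hh j) (sq_nonneg _)
    rw [← Finset.mul_sum] at this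
    linarith
  obtain ⟨j, hj⟩ := this
  have h2 := sum_arctan_le d j
  have h3 := Real.arctan_mono hj.le
  rw [Real.arctan_neg, Real.arctan_one] at h3
  linarith

lemma blk_eta {n : ℕ} {A : Matrix (Fin (n+1)) (Fin (n+1)) ℝ} (hA : A.IsSymm) :
    A = blk (A 0 0) (fun i => A 0 i.succ) (fun i => A 0 i.succ) (Aplus A) := by
  apply blk_ext <;> intros <;> simp [Aplus, hA.apply]

lemma Aplus_symm {n : ℕ} {A : Matrix (Fin (n+1)) (Fin (n+1)) ℝ} (hA : A.IsSymm) : (Aplus A).IsSymm := by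
  ext i j; simp [Aplus, hA.apply]

lemma arg_I_pos {a : ℝ} (ha : 0 < a) : Complex.arg (Complex.I * a) = π / 2 := by
  rw [mul_comm, Complex.arg_real_mul _ ha, Complex.arg_I]

lemma arg_I_neg {a : ℝ} (ha : a < 0) : Complex.arg (Complex.I * a) = - (π / 2) := by
  have : Complex.I * a = ((-a : ℝ) : ℂ) * (-Complex.I) := by push_cast; ring
  rw [this, Complex.arg_real_mul _ (by linarith), Complex.arg_neg_I]

lemma angle_regular' {n : ℕ} {a : ℝ} (ha : a ≠ 0) (b : Fin n → ℝ) {S : Matrix (Fin n) (Fin n) ℝ} (hS : S.IsSymm) :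
    spaceTimeAngle (blk a b b S) = Complex.arg (Complex.I * a) + liftedAngle (S - (1/a) • vecMulVec b b) := by
  have h : (S - (1/a) • vecMulVec b b).IsSymm := by
    rw [sub_eq_add_neg, ← neg_smul]; exact path_symm _ _ hS
  rw [← angle_regular ha b h, sub_add_cancel]

lemma blk_cont {n : ℕ} (b : Fin n → ℝ) (S : Matrix (Fin n) (Fin n) ℝ) : Continuous fun a : ℝ => blk a b b S := by
  refine continuous_matrix fun i j => ?_
  refine Fin.cases ?_ (fun i => ?_) i <;> refine Fin.cases ?_ (fun j => ?_) j
  all_goals simp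
  all_goals fun_prop

lemma calF_iff {n : ℕ} {c : ℝ} (hc : (n : ℝ) * π / 2 ≤ c) (hc' : c < ((n : ℝ) + 1) * π / 2)
    {A : Matrix (Fin (n+1)) (Fin (n+1)) ℝ} (hA : A.IsSymm) :
    A ∈ calF n c ↔ ∃ S ∈ Gset n (c - π / 2), Psd (A - blk 0 0 0 S) := by
  obtain ⟨a, b, S, hS, rfl⟩ : ∃ a b S, S.IsSymm ∧ A = blk a b b S := ⟨_, _, _, Aplus_symm hA, blk_eta hA⟩
  have hsub : ∀ t : ℝ, (S - t • vecMulVec b b).IsSymm := fun t => by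
    rw [sub_eq_add_neg, ← neg_smul]; exact path_symm _ _ hS
  have hqs : ∀ S' : Matrix (Fin n) (Fin n) ℝ, ∀ x, qf (blk a b b S - blk 0 0 0 S') x =
      a * x 0 ^ 2 + 2 * x 0 * (b ⬝ᵥ Fin.tail x) + qf S (Fin.tail x) - qf S' (Fin.tail x) := by
    intro S' x
    rw [qf_sub, qf_blk, qf_blk]; simp
  have hpi := Real.pi_pos
  constructor
  · rintro ⟨-, h⟩
    rcases lt_trichotomy a 0 with ha | ha | ha
    · rw [angle_regular' ha.ne b hS, arg_I_neg ha] at h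
      have := liftedAngle_le_top (hsub (1/a))
      exfalso; linarith
    · subst ha
      by_cases hb : b = 0
      · subst hb
        rw [angle_singular hS] at h
        have hp : Psd S := psd_of_angle hS (by linarith)
        refine ⟨S, (Gset_iff hp).2 (by linarith), ?_⟩
        rw [sub_self]
        exact ⟨isSymm_zero, fun x => by simp [qf]⟩
      · exfalso
        have hdet : (cmat (blk 0 b b S)).det ≠ 0 := by
          intro hd
          apply hb; ext i
          simpa using cmat_det_zero hA hd i.succ
        have hcont : Tendsto (fun δ : ℝ => argsum (cmat (blk δ b b S))) (nhdsWithin 0 (Set.Ioi 0)) (nhds (argsum (cmat (blk 0 b b S)))) := by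
          have h1 := argsum_continuousAt _ (cmat_slit hA hdet)
          have h2 : ContinuousAt (fun δ : ℝ => cmat (blk δ b b S)) 0 := (cmat_continuous.comp (blk_cont b S)).continuousAt
          have h3 : ContinuousAt (fun δ : ℝ => argsum (cmat (blk δ b b S))) 0 :=
            ContinuousAt.comp (f := fun δ : ℝ => cmat (blk δ b b S)) (g := argsum) h1 h2
          exact h3.mono_left nhdsWithin_le_nhds
        rw [spaceTimeAngle_of_ne hdet] at h
        have hbb : 0 < b ⬝ᵥ b := by
          have := dotProduct_self_eq_zero (v := b)
          have h0 : 0 ≤ b ⬝ᵥ b := Finset.sum_nonneg fun i _ => mul_self_nonneg _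
          exact lt_of_le_of_ne h0 (fun h => hb (this.1 h.symm))
        have hev : ∀ᶠ δ : ℝ in nhdsWithin 0 (Set.Ioi 0), argsum (cmat (blk δ b b S)) ≤ n * π / 2 - π / 4 := by
          set M := |qf S b| + ∑ i, b i ^ 2 + 1 with hM
          have hMp : 0 < M := by
            have : 0 ≤ ∑ i, b i ^ 2 := Finset.sum_nonneg fun i _ => sq_nonneg _
            positivity
          have : ∀ᶠ δ : ℝ in nhdsWithin 0 (Set.Ioi 0), δ ∈ Set.Ioo 0 ((b ⬝ᵥ b)^2 / M) :=
            Ioo_mem_nhdsGT (by positivity)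
          filter_upwards [this] with δ hδ
          rw [← spaceTimeAngle_of_ne (blk0_det_ne hδ.1.ne' hS b), angle_regular' hδ.1.ne' b hS, arg_I_pos hδ.1]
          have := angle_le_of_neg (hsub (1/δ)) b ?_
          · linarith
          rw [qf_sub, qf_smul, qf_vecMulVec]
          have h1 : M < 1 / δ * (b ⬝ᵥ b)^2 := by
            have := hδ.2
            rw [lt_div_iff₀ hMp] at this
            rw [one_div, inv_mul_eq_div, lt_div_iff₀ hδ.1]; linarith
          have := le_abs_self (qf S b)
          linarith
        have := le_of_tendsto hcont hev
        linarith
    · rw [angle_regular' ha.ne' b hS, arg_I_pos ha] at h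
      have hp : Psd (S - (1/a) • vecMulVec b b) := psd_of_angle (hsub _) (by linarith)
      refine ⟨_, (Gset_iff hp).2 (by linarith), hA.sub (blk_symm 0 0 (hsub _)), fun x => ?_⟩
      rw [hqs, qf_sub, qf_smul, qf_vecMulVec]
      have : a * x 0 ^ 2 + 2 * x 0 * b ⬝ᵥ Fin.tail x + qf S (Fin.tail x) - (qf S (Fin.tail x) - 1 / a * (b ⬝ᵥ Fin.tail x) ^ 2)
        = (a * x 0 + b ⬝ᵥ Fin.tail x)^2 / a := by field_simp; ring
      rw [this]; positivity
  · rintro ⟨S', hS', hP⟩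
    refine ⟨hA, ?_⟩
    have hP2 : ∀ (t : ℝ) (y : Fin n → ℝ), 0 ≤ a * t ^ 2 + 2 * t * (b ⬝ᵥ y) + qf S y - qf S' y := by
      intro t y
      have := hP.2 (Fin.cons t y)
      rw [hqs] at this
      simpa using this
    have ha : 0 ≤ a := by
      have := hP2 1 0
      simpa [qf] using this
    rcases ha.eq_or_lt with ha | ha
    · subst ha
      have hb : b = 0 := by
        by_contra hb
        have hbb : 0 < b ⬝ᵥ b := by
          have := dotProduct_self_eq_zero (v := b)
          have h0 : 0 ≤ b ⬝ᵥ b := Finset.sum_nonneg fun i _ => mul_self_nonneg _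
          exact lt_of_le_of_ne h0 (fun h => hb (this.1 h.symm))
        have := hP2 (-(qf S b - qf S' b + 1) / (2 * (b ⬝ᵥ b))) b
        have h2 : 2 * (-(qf S b - qf S' b + 1) / (2 * (b ⬝ᵥ b))) * (b ⬝ᵥ b) = -(qf S b - qf S' b + 1) := by
          field_simp
        rw [h2] at this; linarith
      subst hb
      rw [angle_singular hS]
      have hm : S ∈ Gset n (c - π / 2) := Gset_mono hS' hS fun x => by
        have := hP2 0 x; simp at this; exact this
      have := (Gset_iff hm.1).1 hm
      linarith
    · rw [angle_regular' ha.ne' b hS, arg_I_pos ha]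
      have hm : (S - (1/a) • vecMulVec b b) ∈ Gset n (c - π / 2) := Gset_mono hS' (hsub _) fun x => by
        have := hP2 (- (b ⬝ᵥ x) / a) x
        rw [qf_sub, qf_smul, qf_vecMulVec]
        have h2 : a * (- (b ⬝ᵥ x) / a) ^ 2 + 2 * (- (b ⬝ᵥ x) / a) * (b ⬝ᵥ x) = - (1 / a * (b ⬝ᵥ x)^2) := by
          field_simp; ring
        linarith
      have := (Gset_iff hm.1).1 hm
      linarith

structure GoodSet {m : ℕ} (F : Set (Matrix (Fin m) (Fin m) ℝ)) : Prop where
  psd : ∀ A ∈ F, Psd A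
  closed : IsClosed F
  convex : Convex ℝ F
  add_psd : ∀ A ∈ F, ∀ P, Psd P → A + P ∈ F
  ne : ∃ K : ℝ, 0 < K ∧ K • (1 : Matrix (Fin m) (Fin m) ℝ) ∈ F

lemma b_zero_of_psd {n : ℕ} (b : Fin n → ℝ) (q : (Fin n → ℝ) → ℝ)
    (h : ∀ (t : ℝ) (y : Fin n → ℝ), 0 ≤ 2 * t * (b ⬝ᵥ y) + q y) : b = 0 := by
  by_contra hb
  have hbb : 0 < b ⬝ᵥ b := by
    have := dotProduct_self_eq_zero (v := b)
    have h0 : 0 ≤ b ⬝ᵥ b := Finset.sum_nonneg fun i _ => mul_self_nonneg _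
    exact lt_of_le_of_ne h0 (fun h => hb (this.1 h.symm))
  have := h (-(q b + 1) / (2 * (b ⬝ᵥ b))) b
  have h2 : 2 * (-(q b + 1) / (2 * (b ⬝ᵥ b))) * (b ⬝ᵥ b) = -(q b + 1) := by
    field_simp
  rw [h2] at this; linarith

lemma psd_one {m : ℕ} : Psd (1 : Matrix (Fin m) (Fin m) ℝ) :=
  ⟨isSymm_one, fun x => by rw [qf_one]; exact Finset.sum_nonneg fun i _ => sq_nonneg _⟩

lemma psd_add {m : ℕ} {A B : Matrix (Fin m) (Fin m) ℝ} (hA : Psd A) (hB : Psd B) : Psd (A + B) := by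
  have := Psd_comb hA hB zero_le_one zero_le_one
  simpa using this

lemma psd_smul {m : ℕ} {A : Matrix (Fin m) (Fin m) ℝ} (hA : Psd A) {s : ℝ} (hs : 0 ≤ s) : Psd (s • A) := by
  have := Psd_comb hA hA hs le_rfl
  simpa using this

lemma psd_blk0 {n : ℕ} {S : Matrix (Fin n) (Fin n) ℝ} (hS : Psd S) : Psd (blk 0 0 0 S) := by
  refine ⟨blk_symm 0 0 hS.1, fun x => ?_⟩
  rw [qf_blk]; simpa using hS.2 _

/-- approximate Schur complement -/
noncomputable def schur {n : ℕ} (δ : ℝ) (A : Matrix (Fin (n+1)) (Fin (n+1)) ℝ) : Matrix (Fin n) (Fin n) ℝ :=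
  Aplus A - (1 / (|A 0 0| + δ)) • vecMulVec (fun i => A 0 i.succ) (fun i => A 0 i.succ)

lemma schur_cont {n : ℕ} {δ : ℝ} (hδ : 0 < δ) : Continuous (schur (n := n) δ) := by
  have : ∀ i j, Continuous fun A : Matrix (Fin (n+1)) (Fin (n+1)) ℝ => A i j := fun i j => continuous_id.matrix_elem i j
  refine continuous_matrix fun i j => ?_
  simp only [schur, Aplus, Matrix.sub_apply, Matrix.smul_apply, vecMulVec_apply, of_apply, smul_eq_mul]
  have h2 : ∀ A : Matrix (Fin (n+1)) (Fin (n+1)) ℝ, |A 0 0| + δ ≠ 0 := fun A => by positivity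
  have h3 : Continuous fun A : Matrix (Fin (n+1)) (Fin (n+1)) ℝ => 1 / (|A 0 0| + δ) :=
    continuous_const.div ((this 0 0).abs.add continuous_const) h2
  exact (this _ _).sub (h3.mul ((this _ _).mul (this _ _)))

lemma schur_symm {n : ℕ} {δ : ℝ} {A : Matrix (Fin (n+1)) (Fin (n+1)) ℝ} (hA : A.IsSymm) : (schur δ A).IsSymm := by
  rw [schur, sub_eq_add_neg, ← neg_smul]; exact path_symm _ _ (Aplus_symm hA)

lemma calF_eq {n : ℕ} {c : ℝ} (hc : (n : ℝ) * π / 2 ≤ c) (hc' : c < ((n : ℝ) + 1) * π / 2) :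
    calF n c = {A | Psd A} ∩ ⋂ (δ : ℝ) (_ : 0 < δ), schur δ ⁻¹' (Gset n (c - π / 2)) := by
  ext A
  simp only [Set.mem_inter_iff, Set.mem_setOf_eq, Set.mem_iInter, Set.mem_preimage]
  constructor
  · intro hAF
    have hA : A.IsSymm := hAF.1
    rw [calF_iff hc hc' hA] at hAF
    obtain ⟨S, hS, hP⟩ := hAF
    have hPA : Psd A := by
      have := psd_add hP (psd_blk0 hS.1)
      rwa [sub_add_cancel] at this
    refine ⟨hPA, fun δ hδ => Gset_mono hS (schur_symm hA) fun x => ?_⟩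
    have ha : 0 ≤ A 0 0 := by
      have := hPA.2 (Pi.single 0 1)
      simpa [qf] using this
    have h1 := hP.2 (Fin.cons (- ((fun i => A 0 i.succ) ⬝ᵥ x) / (A 0 0 + δ)) x)
    rw [qf_sub, qf_blk] at h1
    conv at h1 => enter [2, 1, 1]; rw [blk_eta hA]
    rw [qf_blk] at h1
    simp only [Fin.cons_zero, Fin.tail_cons, zero_mul, mul_zero, zero_dotProduct, zero_add] at h1
    rw [schur, qf_sub, qf_smul, qf_vecMulVec, abs_of_nonneg ha]
    set a := A 0 0
    set β := (fun i => A 0 (Fin.succ i)) ⬝ᵥ x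
    have had : 0 < a + δ := by linarith
    have h2 : (a + δ) * (- β / (a + δ)) ^ 2 + 2 * (- β / (a + δ)) * β = - (1 / (a + δ) * β^2) := by
      field_simp; ring
    have h3 : 0 ≤ δ * (- β / (a + δ)) ^ 2 := by positivity
    linarith
  · rintro ⟨hPA, h⟩
    have hA := hPA.1
    rw [calF_iff hc hc' hA]
    have ha : 0 ≤ A 0 0 := by
      have := hPA.2 (Pi.single 0 1)
      simpa [qf] using this
    have hP2 : ∀ (t : ℝ) (y : Fin n → ℝ), 0 ≤ A 0 0 * t ^ 2 + 2 * t * ((fun i => A 0 i.succ) ⬝ᵥ y) + qf (Aplus A) y := by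
      intro t y
      have := hPA.2 (Fin.cons t y)
      conv at this => enter [2, 1]; rw [blk_eta hA]
      rw [qf_blk] at this
      simpa using this
    have hb : A 0 0 = 0 → (fun i : Fin n => A 0 i.succ) = 0 := fun h0 =>
      b_zero_of_psd _ (qf (Aplus A)) fun t y => by have := hP2 t y; rw [h0] at this; linarith
    refine ⟨schur 0 A, ?_, hA.sub (blk_symm 0 0 (schur_symm hA)), fun x => ?_⟩
    · have ht : Tendsto (fun δ => schur δ A) (nhdsWithin 0 (Set.Ioi 0)) (nhds (schur 0 A)) := by
        rcases ha.eq_or_lt with h0 | h0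
        · have : ∀ δ, schur δ A = schur 0 A := fun δ => by simp [schur, hb h0.symm]
          simp only [this]; exact tendsto_const_nhds
        · refine Tendsto.mono_left ?_ nhdsWithin_le_nhds
          unfold schur
          refine tendsto_const_nhds.sub (Tendsto.smul ?_ tendsto_const_nhds)
          refine tendsto_const_nhds.div (tendsto_const_nhds.add tendsto_id) ?_
          rw [abs_of_nonneg ha]; linarith
      refine Gset_closed.mem_of_tendsto ht ?_
      filter_upwards [self_mem_nhdsWithin] with δ hδ using h δ hδ
    · rw [qf_sub, qf_blk]
      conv => enter [2, 1, 1]; rw [blk_eta hA]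
      rw [qf_blk, schur, qf_sub, qf_smul, qf_vecMulVec, abs_of_nonneg ha]
      rcases ha.eq_or_lt with h0 | h0
      · rw [hb h0.symm, ← h0]; simp
      · simp only [zero_mul, mul_zero, zero_dotProduct, zero_add, add_zero]
        set a := A 0 0
        set β := (fun i => A 0 (Fin.succ i)) ⬝ᵥ Fin.tail x
        have : a * x 0 ^ 2 + 2 * x 0 * β + qf (Aplus A) (Fin.tail x) - (qf (Aplus A) (Fin.tail x) - 1 / a * β ^ 2)
          = (a * x 0 + β)^2 / a := by field_simp; ring
        rw [this]; positivity

lemma calF_good {n : ℕ} {c : ℝ} (hc : (n : ℝ) * π / 2 ≤ c) (hc' : c < ((n : ℝ) + 1) * π / 2) :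
    GoodSet (calF n c) where
  psd A hA := by rw [calF_eq hc hc'] at hA; exact hA.1
  closed := by
    rw [calF_eq hc hc']
    exact Psd_closed.inter (isClosed_iInter fun δ => isClosed_iInter fun hδ => Gset_closed.preimage (schur_cont hδ))
  convex := by
    intro A hA B hB s t hs ht hst
    have h1 := hA.1; have h2 := hB.1
    rw [calF_iff hc hc' h1] at hA
    rw [calF_iff hc hc' h2] at hB
    rw [calF_iff hc hc' ((h1.smul s).add (h2.smul t))]
    obtain ⟨S, hS, hP⟩ := hA
    obtain ⟨S', hS', hP'⟩ := hB
    refine ⟨s • S + t • S', Gset_convex hS hS' hs ht hst, ?_⟩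
    convert Psd_comb hP hP' hs ht using 1
    apply blk_ext <;> intros <;> simp <;> ring
  add_psd A hA P hP := by
    have h1 := hA.1
    rw [calF_iff hc hc' h1] at hA
    rw [calF_iff hc hc' (h1.add hP.1)]
    obtain ⟨S, hS, hP'⟩ := hA
    refine ⟨S, hS, ?_⟩
    convert psd_add hP' hP using 1
    abel
  ne := by
    have ht : Tendsto (fun K : ℝ => (n : ℝ) * Real.arctan K) atTop (nhds (n * (π / 2))) :=
      (Real.tendsto_arctan_atTop.mono_right nhdsWithin_le_nhds).const_mul _
    have h1 := (ht.eventually (lt_mem_nhds (show c - π / 2 < n * (π / 2) by linarith))).and (eventually_gt_atTop 0)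
    obtain ⟨K, hK, hK0⟩ := h1.exists
    refine ⟨K, hK0, ?_⟩
    rw [calF_iff hc hc' (isSymm_one.smul K)]
    refine ⟨K • 1, ⟨psd_smul psd_one hK0.le, fun O hO => ?_⟩, ?_⟩
    · simp [hO]; linarith [hK]
    · refine ⟨(isSymm_one.smul K).sub (blk_symm 0 0 (isSymm_one.smul K)), fun x => ?_⟩
      rw [qf_sub, qf_blk, qf_smul, qf_smul, qf_one, qf_one, Fin.sum_univ_succ]
      simp [Fin.tail]
      nlinarith [sq_nonneg (x 0)]

lemma qf_bound {m : ℕ} (M : Matrix (Fin m) (Fin m) ℝ) (x : Fin m → ℝ) :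
    |qf M x| ≤ (∑ i, ∑ j, |M i j|) * ∑ i, x i ^ 2 := by
  rw [qf_eq_sum, Finset.sum_mul]
  refine (Finset.abs_sum_le_sum_abs _ _).trans (Finset.sum_le_sum fun i _ => ?_)
  rw [Finset.sum_mul]
  refine (Finset.abs_sum_le_sum_abs _ _).trans (Finset.sum_le_sum fun j _ => ?_)
  rw [abs_mul, mul_comm]
  refine mul_le_mul_of_nonneg_left ?_ (abs_nonneg _)
  have h : ∀ i, x i ^ 2 ≤ ∑ i, x i ^ 2 := fun i =>
    Finset.single_le_sum (f := fun i => x i ^ 2) (fun i _ => sq_nonneg _) (Finset.mem_univ i)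
  rw [abs_le]
  constructor <;> nlinarith [h i, h j, sq_nonneg (x i - x j), sq_nonneg (x i + x j)]

lemma exists_psd_pm {m : ℕ} {M : Matrix (Fin m) (Fin m) ℝ} (hM : M.IsSymm) :
    ∃ K : ℝ, Psd (K • 1 + M) ∧ Psd (K • 1 - M) := by
  refine ⟨∑ i, ∑ j, |M i j|, ⟨(isSymm_one.smul _).add hM, fun x => ?_⟩, ⟨(isSymm_one.smul _).sub hM, fun x => ?_⟩⟩
  · rw [qf_add, qf_smul, qf_one]; have := abs_le.1 (qf_bound M x); linarith
  · rw [qf_sub, qf_smul, qf_one]; have := abs_le.1 (qf_bound M x); linarith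

lemma dual_of_half {m : ℕ} {F : Set (Matrix (Fin m) (Fin m) ℝ)} {f : Matrix (Fin m) (Fin m) ℝ →ₗ[ℝ] ℝ} {t : ℝ}
    (h1 : 0 < f 1) (hf : ∀ B ∈ F, t ≤ f B) {H : Matrix (Fin m) (Fin m) ℝ} (hH : H.IsSymm) (h : - t ≤ f H) :
    H ∈ dualSub F := by
  refine ⟨hH, fun hh => ?_⟩
  have hc : Tendsto (fun ε : ℝ => -H - ε • (1 : Matrix (Fin m) (Fin m) ℝ)) (nhdsWithin 0 (Set.Ioi 0)) (nhds (-H)) := by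
    have : Continuous (fun ε : ℝ => -H - ε • (1 : Matrix (Fin m) (Fin m) ℝ)) := by fun_prop
    have := this.tendsto 0
    rw [zero_smul, sub_zero] at this
    exact this.mono_left nhdsWithin_le_nhds
  obtain ⟨ε, hε, hε0⟩ := ((hc.eventually hh.2).and self_mem_nhdsWithin).exists
  have hε0 : 0 < ε := hε0
  have := hf _ (hε (hH.neg.sub (isSymm_one.smul ε)))
  rw [map_sub, map_neg, map_smul, smul_eq_mul] at this
  nlinarith

lemma sep_lemma {m : ℕ} {F : Set (Matrix (Fin m) (Fin m) ℝ)} (hF : GoodSet F) {A : Matrix (Fin m) (Fin m) ℝ}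
    (hA : A.IsSymm) (hAF : A ∉ F) : ∃ (f : Matrix (Fin m) (Fin m) ℝ →ₗ[ℝ] ℝ) (t : ℝ),
      (∀ P, Psd P → 0 ≤ f P) ∧ 0 < f 1 ∧ (∀ B ∈ F, t ≤ f B) ∧ f A < t := by
  have hcl : IsClosed (X := Fin m → Fin m → ℝ) F := hF.closed
  have hcv : Convex (E := Fin m → Fin m → ℝ) ℝ F := hF.convex
  obtain ⟨f0, t, h1, h2⟩ := geometric_hahn_banach_point_closed (E := Fin m → Fin m → ℝ) hcv hcl hAF
  let f : Matrix (Fin m) (Fin m) ℝ →ₗ[ℝ] ℝ := f0.toLinearMap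
  have h1 : f A < t := h1
  have h2 : ∀ B ∈ F, t < f B := h2
  obtain ⟨K, hK, hB⟩ := hF.ne
  have hpos : ∀ P, Psd P → 0 ≤ f P := by
    intro P hP
    by_contra! hneg
    obtain ⟨B, hB⟩ : ∃ B, B ∈ F := ⟨_, hB⟩
    have hBt := h2 B hB
    have := h2 _ (hF.add_psd B hB (((f B - t) / (- f P)) • P) (psd_smul hP (div_nonneg (by linarith) (by linarith))))
    rw [map_add, map_smul, smul_eq_mul] at this
    have h3 : (f B - t) / (- f P) * f P = - (f B - t) := by
      have := hneg.ne
      field_simp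
    linarith
  refine ⟨f, t, hpos, ?_, fun B hB => (h2 B hB).le, h1⟩
  refine lt_of_le_of_ne (hpos 1 psd_one) fun h0 => ?_
  have hz : ∀ M : Matrix (Fin m) (Fin m) ℝ, M.IsSymm → f M = 0 := by
    intro M hM
    obtain ⟨K, h3, h4⟩ := exists_psd_pm hM
    have h3 := hpos _ h3
    have h4 := hpos _ h4
    rw [map_add, map_smul, ← h0] at h3
    rw [map_sub, map_smul, ← h0] at h4
    simp at h3 h4
    linarith
  have h5 := h2 _ hB
  rw [hz _ (isSymm_one.smul K)] at h5
  rw [hz _ hA] at h1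
  linarith

lemma sum_lemma {m : ℕ} {F : Set (Matrix (Fin m) (Fin m) ℝ)} (hF : GoodSet F) {A C : Matrix (Fin m) (Fin m) ℝ}
    (hA : A ∈ F) (hC : C ∈ dualSub F) {ε : ℝ} (hε : 0 < ε) (h : ∀ x, qf (A + C) x ≤ - (ε * ∑ i, x i ^ 2)) : False := by
  refine hC.2 ⟨hC.1.neg, ?_⟩
  have hc : Tendsto (fun B : Matrix (Fin m) (Fin m) ℝ => ∑ i, ∑ j, |(B + C) i j|) (nhds (-C)) (nhds 0) := by
    have : ∀ i j, Continuous fun A : Matrix (Fin m) (Fin m) ℝ => A i j := fun i j => continuous_id.matrix_elem i j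
    have h1 : Continuous (fun B : Matrix (Fin m) (Fin m) ℝ => ∑ i, ∑ j, |(B + C) i j|) := by
      simp only [Matrix.add_apply]
      fun_prop
    have := h1.tendsto (-C)
    simpa using this
  filter_upwards [hc.eventually (eventually_lt_nhds hε)] with B hB hBs
  have : B = A + (B - A) := by abel
  rw [this]
  refine hF.add_psd A hA _ ⟨hBs.sub (hF.psd A hA).1, fun x => ?_⟩
  have h1 := h x
  have h2 := abs_le.1 (qf_bound (B + C) x)
  have h3 : 0 ≤ ∑ i, x i ^ 2 := Finset.sum_nonneg fun i _ => sq_nonneg _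
  rw [qf_add] at h1 h2
  rw [qf_sub]
  nlinarith

lemma hess_apply {m : ℕ} (v : (Fin m → ℝ) → ℝ) (x : Fin m → ℝ) (i j : Fin m) :
    hessianMatrix v x i j = fderiv ℝ (fderiv ℝ v) x (Pi.single i 1) (Pi.single j 1) := by
  simp [hessianMatrix, iteratedFDeriv_two_apply]

lemma hess_symm {m : ℕ} {v : (Fin m → ℝ) → ℝ} {x : Fin m → ℝ} (hv : ContDiffAt ℝ 2 v x) :
    (hessianMatrix v x).IsSymm := by
  ext i j
  rw [transpose_apply, hess_apply, hess_apply]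
  exact (hv.isSymmSndFDerivAt (by simp)) _ _

lemma hess_qf {m : ℕ} (v : (Fin m → ℝ) → ℝ) (x ξ : Fin m → ℝ) :
    qf (hessianMatrix v x) ξ = fderiv ℝ (fderiv ℝ v) x ξ ξ := by
  rw [qf_eq_sum]
  have h : ξ = ∑ i, ξ i • (Pi.single i 1 : Fin m → ℝ) := by
    ext k; simp [Finset.sum_apply, Pi.single_apply]
  conv_rhs => rw [h]
  simp only [map_sum, map_smul, ContinuousLinearMap.sum_apply, ContinuousLinearMap.smul_apply, smul_eq_mul,
    Finset.mul_sum, hess_apply]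
  rw [Finset.sum_comm]
  refine Finset.sum_congr rfl fun i _ => Finset.sum_congr rfl fun j _ => by ring_nf

lemma hess_add {m : ℕ} {v w : (Fin m → ℝ) → ℝ} {x : Fin m → ℝ} (hv : ContDiffAt ℝ 2 v x) (hw : ContDiffAt ℝ 2 w x) :
    hessianMatrix (fun y => v y + w y) x = hessianMatrix v x + hessianMatrix w x := by
  ext i j
  have := iteratedFDeriv_add_apply (i := 2) (𝕜 := ℝ) hv hw
  have h2 : (fun y => v y + w y) = v + w := rfl
  simp only [hessianMatrix, of_apply, Matrix.add_apply]
  rw [h2, this]; rfl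

lemma hess_smul {m : ℕ} {v : (Fin m → ℝ) → ℝ} {x : Fin m → ℝ} (hv : ContDiffAt ℝ 2 v x) (s : ℝ) :
    hessianMatrix (fun y => s * v y) x = s • hessianMatrix v x := by
  ext i j
  have := iteratedFDeriv_const_smul_apply (i := 2) (𝕜 := ℝ) (a := s) hv
  have h2 : (fun y => s * v y) = s • v := rfl
  simp only [hessianMatrix, of_apply, Matrix.smul_apply]
  rw [h2, this]; rfl

lemma hess_sub {m : ℕ} {v w : (Fin m → ℝ) → ℝ} {x : Fin m → ℝ} (hv : ContDiffAt ℝ 2 v x) (hw : ContDiffAt ℝ 2 w x) :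
    hessianMatrix (fun y => v y - w y) x = hessianMatrix v x - hessianMatrix w x := by
  have h1 : (fun y => v y - w y) = fun y => v y + (-1) * w y := by ext; ring
  rw [h1, hess_add hv (contDiffAt_const.mul hw), hess_smul hw]
  simp [sub_eq_add_neg]

lemma hess_shift {m : ℕ} (v : (Fin m → ℝ) → ℝ) (x a : Fin m → ℝ) :
    hessianMatrix (fun y => v (y + a)) x = hessianMatrix v (x + a) := by
  simp only [hessianMatrix, iteratedFDeriv_comp_add_right]

lemma hess_cont {m : ℕ} {v : (Fin m → ℝ) → ℝ} (hv : ContDiff ℝ 2 v) : Continuous (hessianMatrix v) := by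
  refine continuous_matrix fun i j => ?_
  simp only [hess_apply]
  have h1 : ContDiff ℝ 1 (fderiv ℝ v) := hv.fderiv_right (by norm_num)
  have h2 : Continuous (fderiv ℝ (fderiv ℝ v)) := h1.continuous_fderiv (by simp)
  fun_prop

lemma hess_localmax {m : ℕ} {v : (Fin m → ℝ) → ℝ} {x : Fin m → ℝ} (hv : ContDiffAt ℝ 2 v x)
    (hmax : IsLocalMax v x) (ξ : Fin m → ℝ) : qf (hessianMatrix v x) ξ ≤ 0 := by
  rw [hess_qf]
  by_contra! hpos
  set φ : ℝ → ℝ := fun t => v (x + t • ξ) with hφ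
  have hline : ∀ t : ℝ, HasDerivAt (fun t : ℝ => x + t • ξ) ξ t := fun t => by
    simpa using ((hasDerivAt_id t).smul_const ξ).const_add x
  have hc : ContinuousAt (fun t : ℝ => x + t • ξ) 0 := (hline 0).continuousAt
  have ht : Tendsto (fun t : ℝ => x + t • ξ) (nhds 0) (nhds x) := by
    have := hc.tendsto; simpa using this
  have hd1 : ∀ᶠ t in nhds (0 : ℝ), deriv φ t = fderiv ℝ v (x + t • ξ) ξ := by
    have h1 : ∀ᶠ y in nhds x, DifferentiableAt ℝ v y := by
      have := hv.eventually (by simp)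
      filter_upwards [this] with y hy using hy.differentiableAt (by simp)
    filter_upwards [ht.eventually h1] with t h
    exact (h.hasFDerivAt.comp_hasDerivAt t (hline t)).deriv
  have hd2 : deriv (deriv φ) 0 = fderiv ℝ (fderiv ℝ v) x ξ ξ := by
    rw [EventuallyEq.deriv_eq hd1]
    have h1 : DifferentiableAt ℝ (fderiv ℝ v) x := (hv.fderiv_right (m := 1) (by norm_num)).differentiableAt (by simp)
    have h2 : HasDerivAt (fun t : ℝ => fderiv ℝ v (x + t • ξ)) (fderiv ℝ (fderiv ℝ v) x ξ) 0 := by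
      have h3 : HasFDerivAt (fderiv ℝ v) (fderiv ℝ (fderiv ℝ v) x) (x + (0:ℝ) • ξ) := by
        simpa using h1.hasFDerivAt
      exact h3.comp_hasDerivAt 0 (hline 0)
    exact ((ContinuousLinearMap.apply ℝ ℝ ξ).hasFDerivAt.comp_hasDerivAt 0 h2).deriv
  have hmax' : IsLocalMax φ 0 := by
    have := ht.eventually hmax
    simpa [IsLocalMax, IsMaxFilter, hφ] using this
  have hmin : IsLocalMin φ 0 := by
    apply isLocalMin_of_deriv_deriv_pos
    · rw [hd2]; exact hpos
    · exact hmax'.deriv_eq_zero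
    · have : ContinuousAt v (x + (0:ℝ) • ξ) := by simpa using hv.continuousAt
      exact ContinuousAt.comp this hc
  have hconst : φ =ᶠ[nhds 0] fun _ => φ 0 := by
    filter_upwards [hmax', hmin] with t h1 h2 using le_antisymm h1 h2
  have := hconst.deriv.deriv_eq
  rw [hd2] at this
  simp at this
  linarith

lemma poly_hasFDeriv {m : ℕ} (p : MvPolynomial (Fin m) ℝ) (x : Fin m → ℝ) :
    HasFDerivAt (fun y => MvPolynomial.eval y p)
      (∑ i, MvPolynomial.eval x (MvPolynomial.pderiv i p) • ContinuousLinearMap.proj (R := ℝ) (φ := fun _ : Fin m => ℝ) i) x := by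
  induction p using MvPolynomial.induction_on with
  | C a => simpa using hasFDerivAt_const a x
  | add p q hp hq =>
    have h := hp.fun_add hq
    simp only [map_add, add_smul, Finset.sum_add_distrib]
    exact h
  | mul_X p k hp =>
    have h2 : HasFDerivAt (fun y : Fin m → ℝ => y k) (ContinuousLinearMap.proj (R := ℝ) (φ := fun _ : Fin m => ℝ) k) x :=
      (ContinuousLinearMap.proj (R := ℝ) (φ := fun _ : Fin m => ℝ) k).hasFDerivAt
    have h := hp.fun_mul h2
    simp only [map_mul, MvPolynomial.eval_X]
    refine h.congr_fderiv ?_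
    ext ξ
    have h3 : ∀ i, (MvPolynomial.pderiv i (MvPolynomial.X k : MvPolynomial (Fin m) ℝ)) = MvPolynomial.C (if i = k then 1 else 0) := by
      intro i; rw [MvPolynomial.pderiv_X, Pi.single_apply]; simp only [eq_comm (a := i)]; split_ifs <;> simp
    simp only [MvPolynomial.pderiv_mul, h3, map_add, map_mul, MvPolynomial.eval_C, MvPolynomial.eval_X]
    simp [Finset.sum_add_distrib, add_mul, Finset.mul_sum]
    rw [add_comm]
    congr 1
    refine Finset.sum_congr rfl fun i _ => by ring

lemma poly_contDiff {m : ℕ} (p : MvPolynomial (Fin m) ℝ) {k : WithTop ℕ∞} : ContDiff ℝ k (fun y => MvPolynomial.eval y p) := by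
  induction p using MvPolynomial.induction_on with
  | C a => simpa using contDiff_const
  | add p q hp hq => simpa using hp.add hq
  | mul_X p k hp =>
    simp only [map_mul, MvPolynomial.eval_X]
    exact hp.mul (contDiff_apply ℝ ℝ k)

lemma hess_poly {m : ℕ} (p : MvPolynomial (Fin m) ℝ) (x : Fin m → ℝ) :
    hessianMatrix (fun y => MvPolynomial.eval y p) x =
      of fun i j => MvPolynomial.eval x (MvPolynomial.pderiv i (MvPolynomial.pderiv j p)) := by
  ext i j
  rw [hess_apply]
  have h1 : fderiv ℝ (fun y => MvPolynomial.eval y p) = fun x =>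
      (∑ i, MvPolynomial.eval x (MvPolynomial.pderiv i p) • ContinuousLinearMap.proj (R := ℝ) (φ := fun _ : Fin m => ℝ) i) := by
    ext1 x; exact (poly_hasFDeriv p x).fderiv
  rw [h1]
  have h2 : HasFDerivAt (fun x =>
      (∑ i, MvPolynomial.eval x (MvPolynomial.pderiv i p) • ContinuousLinearMap.proj (R := ℝ) (φ := fun _ : Fin m => ℝ) i)) _ x :=
    HasFDerivAt.fun_sum (u := Finset.univ) fun k _ => (poly_hasFDeriv (MvPolynomial.pderiv k p) x).smul_const (ContinuousLinearMap.proj (R := ℝ) (φ := fun _ : Fin m => ℝ) k)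
  rw [h2.fderiv]
  simp [Pi.single_apply]

/-- quadratic polynomial -/
noncomputable def quadPoly {m : ℕ} (M : Matrix (Fin m) (Fin m) ℝ) (a : Fin m → ℝ) : MvPolynomial (Fin m) ℝ :=
  ∑ i, ∑ j, MvPolynomial.C (M i j) * ((MvPolynomial.X i - MvPolynomial.C (a i)) * (MvPolynomial.X j - MvPolynomial.C (a j)))

lemma quadPoly_eval {m : ℕ} (M : Matrix (Fin m) (Fin m) ℝ) (a x : Fin m → ℝ) :
    MvPolynomial.eval x (quadPoly M a) = qf M (x - a) := by
  simp only [quadPoly, qf_eq_sum, map_sum, map_mul, map_sub, MvPolynomial.eval_C, MvPolynomial.eval_X, Pi.sub_apply]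
  refine Finset.sum_congr rfl fun i _ => Finset.sum_congr rfl fun j _ => by ring

lemma qf_contDiff {m : ℕ} (M : Matrix (Fin m) (Fin m) ℝ) (a : Fin m → ℝ) {k : WithTop ℕ∞} :
    ContDiff ℝ k (fun y => qf M (y - a)) := by
  have := poly_contDiff (quadPoly M a) (k := k)
  simpa only [quadPoly_eval] using this

lemma hess_quad {m : ℕ} (M : Matrix (Fin m) (Fin m) ℝ) (a x : Fin m → ℝ) :
    hessianMatrix (fun y => qf M (y - a)) x = M + Mᵀ := by
  have := hess_poly (quadPoly M a) x
  simp only [quadPoly_eval] at this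
  rw [this]
  ext k l
  have h3 : ∀ (l i : Fin m) (r : ℝ), (MvPolynomial.pderiv l (MvPolynomial.X i - MvPolynomial.C r : MvPolynomial (Fin m) ℝ))
      = MvPolynomial.C (if i = l then 1 else 0) := by
    intro l i r
    rw [map_sub, MvPolynomial.pderiv_X, Pi.single_apply, MvPolynomial.pderiv_C]; split_ifs <;> simp
  have h4 : ∀ i j, MvPolynomial.eval x (MvPolynomial.pderiv k (MvPolynomial.pderiv l
      (MvPolynomial.C (M i j) * ((MvPolynomial.X i - MvPolynomial.C (a i)) * (MvPolynomial.X j - MvPolynomial.C (a j))))))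
      = (if i = l then (if j = k then M i j else 0) else 0) + (if i = k then (if j = l then M i j else 0) else 0) := by
    intro i j
    rw [MvPolynomial.pderiv_C_mul (i := l), MvPolynomial.pderiv_mul (i := l), h3, h3, MvPolynomial.pderiv_C_mul, map_add,
      MvPolynomial.pderiv_C_mul, h3, mul_comm _ (MvPolynomial.C (if j = l then (1:ℝ) else 0)), MvPolynomial.pderiv_C_mul, h3]
    simp only [map_mul, map_add, MvPolynomial.eval_C]
    split_ifs <;> simp [mul_add]
  rw [of_apply, quadPoly]
  simp only [map_sum, h4, Finset.sum_add_distrib]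
  simp [add_comm]

lemma hess_affine {m : ℕ} (a : (Fin m → ℝ) →ᵃ[ℝ] ℝ) : ContDiff ℝ 2 a ∧ ∀ x, hessianMatrix a x = 0 := by
  have h : (a : (Fin m → ℝ) → ℝ) = fun x => (LinearMap.toContinuousLinearMap a.linear) x + a 0 := by
    ext x
    have := congrFun a.decomp x
    simpa using this
  constructor
  · rw [h]; exact (ContinuousLinearMap.contDiff _).add contDiff_const
  · intro x
    ext i j
    rw [hess_apply, h]
    have h1 : (fderiv ℝ fun x => (LinearMap.toContinuousLinearMap a.linear) x + a 0) =
        fun _ => LinearMap.toContinuousLinearMap a.linear := by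
      ext1 y
      exact ((ContinuousLinearMap.hasFDerivAt _).add_const _).fderiv
    rw [h1]; simp

lemma typeF_of_hess {m : ℕ} {F : Set (Matrix (Fin m) (Fin m) ℝ)} (hF : GoodSet F) {U : Set (Fin m → ℝ)} (hU : IsOpen U)
    {W : (Fin m → ℝ) → ℝ} (hW : ContDiffOn ℝ 2 W U) (hess : ∀ x ∈ U, hessianMatrix W x ∈ F) :
    IsTypeF F U (fun y => ((W y : ℝ) : EReal)) := by
  refine ⟨fun x _ => EReal.coe_ne_top _, ?_, fun v hv hvd a K hK hKU hbd x0 hx0 => ?_⟩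
  · exact (continuous_coe_real_ereal.comp_continuousOn hW.continuousOn).upperSemicontinuousOn
  simp only [← EReal.coe_add, EReal.coe_le_coe_iff] at hbd ⊢
  by_contra! hgap
  obtain ⟨ha, ha0⟩ := hess_affine a
  set g : (Fin m → ℝ) → ℝ := fun y => qf (1 : Matrix (Fin m) (Fin m) ℝ) (y - x0) with hg
  have hgc : ContDiff ℝ 2 g := qf_contDiff 1 x0
  obtain ⟨R, hR⟩ := (hK.image hgc.continuous).bddAbove
  have hR : ∀ y ∈ K, g y ≤ R := fun y hy => hR ⟨y, hy, rfl⟩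
  have hR0 : 0 ≤ R := by
    have := hR x0 hx0; simpa [hg, qf] using this
  set ε := (W x0 + v x0 - a x0) / (R + 1) with hε
  have hε0 : 0 < ε := div_pos (by linarith) (by linarith)
  have hεR : ε * R < W x0 + v x0 - a x0 := by
    rw [hε, div_mul_eq_mul_div, div_lt_iff₀ (by linarith)]
    nlinarith
  set G : (Fin m → ℝ) → ℝ := fun y => (W y + v y - a y) + ε * g y with hG
  have hGc : ContDiffOn ℝ 2 G U := ((hW.add hv).sub ha.contDiffOn).add (contDiffOn_const.mul hgc.contDiffOn)
  obtain ⟨y, hyK, hymax⟩ := hK.exists_isMaxOn ⟨x0, hx0⟩ (hGc.continuousOn.mono hKU)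
  have hy0 : W x0 + v x0 - a x0 ≤ G y := by
    have := hymax hx0
    simp only [Set.mem_setOf_eq] at this
    refine le_trans ?_ this
    simp [hG, hg, qf]
  have hyint : y ∈ interior K := by
    by_contra hni
    have hf : y ∈ frontier K := ⟨subset_closure hyK, hni⟩
    have h1 := hbd y hf
    have h2 := hR y hyK
    have h3 : G y ≤ ε * R := by
      simp only [hG]; nlinarith
    linarith
  have hloc : IsLocalMax G y := by
    filter_upwards [mem_interior_iff_mem_nhds.1 hyint] with z hz using hymax hz
  have hyU : U ∈ nhds y := hU.mem_nhds (hKU hyK)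
  have hWy := hW.contDiffAt hyU
  have hvy := hv.contDiffAt hyU
  have hay := ha.contDiffAt (x := y)
  have hgy := hgc.contDiffAt (x := y)
  have hh : hessianMatrix G y = hessianMatrix W y + hessianMatrix v y + (2 * ε) • 1 := by
    rw [hG, hess_add ((hWy.add hvy).sub hay) (contDiffAt_const.mul hgy), hess_smul hgy, hess_sub (hWy.add hvy) hay,
      hess_add hWy hvy, ha0, hg, hess_quad, transpose_one, sub_zero, ← two_smul ℝ, smul_smul, mul_comm]
  refine sum_lemma hF (hess y (hKU hyK)) (hvd y (hKU hyK)) (ε := 2 * ε) (by linarith) fun ξ => ?_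
  have := hess_localmax (hGc.contDiffAt hyU) hloc ξ
  rw [hh, qf_add, qf_smul, qf_one] at this
  linarith

/-- Euclidean closed ball -/
def eball {m : ℕ} (x0 : Fin m → ℝ) (r : ℝ) : Set (Fin m → ℝ) := {y | qf (1 : Matrix (Fin m) (Fin m) ℝ) (y - x0) ≤ r ^ 2}

lemma qf1_cont {m : ℕ} (x0 : Fin m → ℝ) : Continuous fun y => qf (1 : Matrix (Fin m) (Fin m) ℝ) (y - x0) :=
  (qf_contDiff (k := 0) 1 x0).continuous

lemma eball_compact {m : ℕ} (x0 : Fin m → ℝ) {r : ℝ} (hr : 0 ≤ r) : IsCompact (eball x0 r) := by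
  have h1 : IsClosed (eball x0 r) := isClosed_le (qf1_cont x0) continuous_const
  refine (isCompact_closedBall x0 r).of_isClosed_subset h1 fun y hy => ?_
  rw [Metric.mem_closedBall, dist_pi_le_iff hr]
  intro i
  rw [Real.dist_eq]
  refine abs_le_of_sq_le_sq ?_ hr
  refine le_trans ?_ hy
  rw [qf_one]
  exact Finset.single_le_sum (f := fun i => (y - x0) i ^ 2) (fun i _ => sq_nonneg _) (Finset.mem_univ i)

lemma eball_self {m : ℕ} (x0 : Fin m → ℝ) (r : ℝ) : x0 ∈ eball x0 r := by
  show qf _ _ ≤ _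
  rw [sub_self, qf_one]; simp; positivity

lemma fhess_nonpos {m : ℕ} {f : Matrix (Fin m) (Fin m) ℝ →ₗ[ℝ] ℝ} (hf : ∀ P, Psd P → 0 ≤ f P)
    {G : (Fin m → ℝ) → ℝ} {y : Fin m → ℝ} (hG : ContDiffAt ℝ 2 G y) (hm : IsLocalMax G y) : f (hessianMatrix G y) ≤ 0 := by
  have := hf (-hessianMatrix G y) ⟨(hess_symm hG).neg, fun ξ => by
    rw [qf_neg]; have := hess_localmax hG hm ξ; linarith⟩
  rw [map_neg] at this; linarith

lemma max_principle {m : ℕ} {f : Matrix (Fin m) (Fin m) ℝ →ₗ[ℝ] ℝ} (hf : ∀ P, Psd P → 0 ≤ f P) (hf1 : 0 < f 1)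
    {G : (Fin m → ℝ) → ℝ} (hG : ContDiff ℝ 2 G) {x0 : Fin m → ℝ} {r : ℝ} (hr : 0 ≤ r)
    (h : ∀ y ∈ eball x0 r, 0 ≤ f (hessianMatrix G y)) {M : ℝ}
    (hbd : ∀ y, qf (1 : Matrix (Fin m) (Fin m) ℝ) (y - x0) = r ^ 2 → G y ≤ M) : ∀ y ∈ eball x0 r, G y ≤ M := by
  intro y0 hy0
  by_contra! hgap
  set g : (Fin m → ℝ) → ℝ := fun y => qf (1 : Matrix (Fin m) (Fin m) ℝ) (y - x0) with hg
  have hgc : ContDiff ℝ 2 g := qf_contDiff 1 x0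
  set ε := (G y0 - M) / (r ^ 2 + 1) with hε
  have hε0 : 0 < ε := div_pos (by linarith) (by positivity)
  have hεR : ε * r ^ 2 < G y0 - M := by
    rw [hε, div_mul_eq_mul_div, div_lt_iff₀ (by positivity)]
    nlinarith
  have hGe : ContDiff ℝ 2 (fun y => G y + ε * g y) := hG.add (contDiff_const.mul hgc)
  obtain ⟨y, hyK, hymax⟩ := (eball_compact x0 hr).exists_isMaxOn ⟨y0, hy0⟩ hGe.continuous.continuousOn
  have hg0 : 0 ≤ g y0 := psd_one.2 _
  have hy1 : G y0 ≤ G y + ε * g y := by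
    have h1 : G y0 + ε * g y0 ≤ G y + ε * g y := hymax hy0
    nlinarith
  have hlt : g y < r ^ 2 := by
    refine lt_of_le_of_ne hyK fun he => ?_
    have := hbd y he
    rw [he] at hy1; linarith
  have hloc : IsLocalMax (fun y => G y + ε * g y) y := by
    have : ∀ᶠ z in nhds y, g z < r ^ 2 := hgc.continuous.continuousAt.eventually (gt_mem_nhds hlt)
    filter_upwards [this] with z hz using hymax (show z ∈ eball x0 r from hz.le)
  have h3 := fhess_nonpos hf hGe.contDiffAt hloc
  rw [hess_add hG.contDiffAt (contDiff_const.mul hgc).contDiffAt, hess_smul hgc.contDiffAt, hg, hess_quad, transpose_one,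
    ← two_smul ℝ, map_add, map_smul, map_smul, smul_eq_mul, smul_eq_mul] at h3
  have h4 := h y hyK
  have : 0 < ε * (2 * f 1) := by positivity
  linarith

/-- constant coefficient operator on polynomials -/
noncomputable def Lop {m : ℕ} (f : Matrix (Fin m) (Fin m) ℝ →ₗ[ℝ] ℝ) :
    MvPolynomial (Fin m) ℝ →ₗ[ℝ] MvPolynomial (Fin m) ℝ :=
  ∑ i, ∑ j, f (Matrix.single i j 1) • ((MvPolynomial.pderiv i).toLinearMap ∘ₗ (MvPolynomial.pderiv j).toLinearMap)

lemma Lop_apply {m : ℕ} (f : Matrix (Fin m) (Fin m) ℝ →ₗ[ℝ] ℝ) (p : MvPolynomial (Fin m) ℝ) :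
    Lop f p = ∑ i, ∑ j, f (Matrix.single i j 1) • (MvPolynomial.pderiv i (MvPolynomial.pderiv j p)) := by
  simp [Lop, LinearMap.sum_apply]

lemma Lop_eval {m : ℕ} (f : Matrix (Fin m) (Fin m) ℝ →ₗ[ℝ] ℝ) (p : MvPolynomial (Fin m) ℝ) (x : Fin m → ℝ) :
    MvPolynomial.eval x (Lop f p) = f (hessianMatrix (fun y => MvPolynomial.eval y p) x) := by
  rw [Lop_apply, hess_poly, matrix_eq_sum_single (of _)]
  simp only [map_sum, MvPolynomial.smul_eval]
  refine Finset.sum_congr rfl fun i _ => Finset.sum_congr rfl fun j _ => ?_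
  have : Matrix.single i j (MvPolynomial.eval x (MvPolynomial.pderiv i (MvPolynomial.pderiv j p))) =
    (MvPolynomial.eval x (MvPolynomial.pderiv i (MvPolynomial.pderiv j p))) • Matrix.single i j (1:ℝ) := by simp
  rw [of_apply, this, map_smul, smul_eq_mul, mul_comm]

lemma totalDegree_pderiv_le' {m : ℕ} (p : MvPolynomial (Fin m) ℝ) (i : Fin m) :
    (MvPolynomial.pderiv i p).totalDegree ≤ p.totalDegree - 1 := by
  rw [MvPolynomial.totalDegree, Finset.sup_le_iff]
  intro s hs
  rw [MvPolynomial.mem_support_iff, MvPolynomial.coeff_pderiv] at hs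
  have h1 : s + Finsupp.single i 1 ∈ p.support := by
    rw [MvPolynomial.mem_support_iff]; exact left_ne_zero_of_mul hs
  have h2 := MvPolynomial.le_totalDegree h1
  rw [Finsupp.sum_add_index' (by simp) (by simp)] at h2
  simp at h2
  change (s.sum fun _ e => e) ≤ _
  omega

lemma Lop_degree {m : ℕ} (f : Matrix (Fin m) (Fin m) ℝ →ₗ[ℝ] ℝ) (p : MvPolynomial (Fin m) ℝ) :
    (Lop f p).totalDegree ≤ p.totalDegree - 2 := by
  rw [Lop_apply]
  refine MvPolynomial.totalDegree_finsetSum_le fun i _ => MvPolynomial.totalDegree_finsetSum_le fun j _ => ?_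
  refine (MvPolynomial.totalDegree_smul_le _ _).trans ?_
  have h1 := totalDegree_pderiv_le' (MvPolynomial.pderiv j p) i
  have h2 := totalDegree_pderiv_le' p j
  omega

lemma quadPoly_degree {m : ℕ} (M : Matrix (Fin m) (Fin m) ℝ) (a : Fin m → ℝ) : (quadPoly M a).totalDegree ≤ 2 := by
  refine MvPolynomial.totalDegree_finsetSum_le fun i _ => MvPolynomial.totalDegree_finsetSum_le fun j _ => ?_
  refine (MvPolynomial.totalDegree_mul _ _).trans ?_
  have h0 := MvPolynomial.totalDegree_C (σ := Fin m) (M i j)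
  have h1 := MvPolynomial.totalDegree_mul (MvPolynomial.X i - MvPolynomial.C (a i)) (MvPolynomial.X j - MvPolynomial.C (a j))
  have h2 := MvPolynomial.totalDegree_sub_C_le (MvPolynomial.X i) (a i)
  have h3 := MvPolynomial.totalDegree_sub_C_le (MvPolynomial.X j) (a j)
  rw [MvPolynomial.totalDegree_X] at h2 h3
  omega

lemma dirichlet {m : ℕ} {f : Matrix (Fin m) (Fin m) ℝ →ₗ[ℝ] ℝ} (hf : ∀ P, Psd P → 0 ≤ f P) (hf1 : 0 < f 1)
    (x0 : Fin m → ℝ) {r : ℝ} (hr : 0 < r) (p : MvPolynomial (Fin m) ℝ) :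
    ∃ h : MvPolynomial (Fin m) ℝ, (∀ x, f (hessianMatrix (fun y => MvPolynomial.eval y h) x) = 0) ∧
      ∀ x, qf (1 : Matrix (Fin m) (Fin m) ℝ) (x - x0) = r ^ 2 → MvPolynomial.eval x h = MvPolynomial.eval x p := by
  set E : MvPolynomial (Fin m) ℝ := MvPolynomial.C (r^2) - quadPoly 1 x0 with hE
  have hEe : ∀ x, MvPolynomial.eval x E = r ^ 2 - qf (1 : Matrix (Fin m) (Fin m) ℝ) (x - x0) := fun x => by
    rw [hE, map_sub, MvPolynomial.eval_C, quadPoly_eval]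
  have hEdeg : E.totalDegree ≤ 2 := by
    have := MvPolynomial.totalDegree_sub (MvPolynomial.C (r^2)) (quadPoly (1 : Matrix (Fin m) (Fin m) ℝ) x0)
    rw [MvPolynomial.totalDegree_C] at this
    have h2 := quadPoly_degree (1 : Matrix (Fin m) (Fin m) ℝ) x0
    rw [hE]; omega
  have hE0 : E ≠ 0 := by
    intro h0
    have := hEe x0
    rw [h0, sub_self, qf_one] at this
    simp at this
    nlinarith
  have hdeg : ∀ q, (Lop f (E * q)).totalDegree ≤ q.totalDegree := fun q => by
    have h1 := Lop_degree f (E * q)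
    have h2 := MvPolynomial.totalDegree_mul E q
    omega
  have hinj : ∀ q, Lop f (E * q) = 0 → q = 0 := by
    intro q hq
    have hz : ∀ x, f (hessianMatrix (fun y => MvPolynomial.eval y (E * q)) x) = 0 := fun x => by
      rw [← Lop_eval, hq, map_zero]
    have hz' : ∀ x, f (hessianMatrix (fun y => MvPolynomial.eval y (-(E * q))) x) = 0 := fun x => by
      rw [← Lop_eval, map_neg, hq, neg_zero, map_zero]
    have hb : ∀ y, qf (1 : Matrix (Fin m) (Fin m) ℝ) (y - x0) = r ^ 2 → MvPolynomial.eval y (E * q) = 0 := fun y hy => by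
      rw [map_mul, hEe, hy]; simp
    have h1 := max_principle hf hf1 (poly_contDiff (E * q)) hr.le (x0 := x0) (fun y _ => (hz y).ge) (M := 0)
      (fun y hy => (hb y hy).le)
    have h2 := max_principle hf hf1 (poly_contDiff (-(E * q))) hr.le (x0 := x0) (fun y _ => (hz' y).ge) (M := 0)
      (fun y hy => by rw [map_neg, hb y hy, neg_zero])
    have hEq : E * q = 0 := by
      have hmem : eball x0 r ∈ nhds x0 := by
        have : ∀ᶠ z in nhds x0, qf (1 : Matrix (Fin m) (Fin m) ℝ) (z - x0) < r ^ 2 :=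
          (qf1_cont x0).continuousAt.eventually (gt_mem_nhds (by simp only [sub_self, qf_one]; simp; positivity))
        filter_upwards [this] with z hz using hz.le
      obtain ⟨δ, hδ, hsub⟩ := Metric.mem_nhds_iff.1 hmem
      refine MvPolynomial.funext_set (fun i => Metric.ball (x0 i) δ) (fun i => ?_) fun x hx => ?_
      · rw [Real.ball_eq_Ioo]; exact Set.Ioo_infinite (by linarith)
      · have : x ∈ eball x0 r := hsub (by
          rw [ball_pi _ hδ]; exact hx)
        have ha := h1 x this
        have hb := h2 x this
        rw [map_neg] at hb
        rw [map_zero]; linarith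
    exact (mul_eq_zero.1 hEq).resolve_left hE0
  set N := (Lop f p).totalDegree
  let T : MvPolynomial.restrictTotalDegree (Fin m) ℝ N →ₗ[ℝ] MvPolynomial.restrictTotalDegree (Fin m) ℝ N :=
    ((Lop f ∘ₗ LinearMap.mulLeft ℝ E).restrict (fun q hq => by
      rw [MvPolynomial.mem_restrictTotalDegree] at hq ⊢
      exact (hdeg q).trans hq))
  have hTinj : Function.Injective T := by
    rw [← LinearMap.ker_eq_bot, LinearMap.ker_eq_bot']
    intro q hq
    have : Lop f (E * q.1) = 0 := congrArg Subtype.val hq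
    exact Subtype.ext (hinj _ this)
  obtain ⟨q, hq⟩ := LinearMap.injective_iff_surjective.1 hTinj ⟨Lop f p, by
    rw [MvPolynomial.mem_restrictTotalDegree]⟩
  have hq : Lop f (E * q.1) = Lop f p := congrArg Subtype.val hq
  refine ⟨p - E * q.1, fun x => ?_, fun x hx => ?_⟩
  · rw [← Lop_eval, map_sub, hq, sub_self, map_zero]
  · rw [map_sub, map_mul, hEe, hx]; simp

lemma comparison {m : ℕ} {F : Set (Matrix (Fin m) (Fin m) ℝ)} {U : Set (Fin m → ℝ)} {u : (Fin m → ℝ) → EReal}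
    (hu : IsTypeF F U u) {f : Matrix (Fin m) (Fin m) ℝ →ₗ[ℝ] ℝ} {t : ℝ} (hf1 : 0 < f 1) (hft : ∀ B ∈ F, t ≤ f B)
    {g : (Fin m → ℝ) → ℝ} {x0 z : Fin m → ℝ} {r : ℝ} (hr : 0 ≤ r)
    (hz : ∀ y ∈ eball x0 r, y - z ∈ U ∧ u (y - z) = ((g (y - z) : ℝ) : EReal))
    {h : (Fin m → ℝ) → ℝ} (hh : ContDiff ℝ 2 h) (hh0 : ∀ x, f (hessianMatrix h x) = 0) {M : ℝ}
    (hM : ∀ y, qf (1 : Matrix (Fin m) (Fin m) ℝ) (y - x0) = r ^ 2 →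
      g (y - z) - t / (2 * f 1) * qf (1 : Matrix (Fin m) (Fin m) ℝ) (y - x0) ≤ h y + M) :
    g (x0 - z) ≤ h x0 + M := by
  set q : (Fin m → ℝ) → ℝ := fun y => t / (2 * f 1) * qf (1 : Matrix (Fin m) (Fin m) ℝ) (y - x0) with hq
  have hqc : ContDiff ℝ 2 q := contDiff_const.mul (qf_contDiff 1 x0)
  have hqh : ∀ y, f (hessianMatrix q y) = t := fun y => by
    rw [hq, hess_smul (qf_contDiff 1 x0).contDiffAt, hess_quad, transpose_one, ← two_smul ℝ, map_smul, map_smul,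
      smul_eq_mul, smul_eq_mul]
    field_simp
  set w : (Fin m → ℝ) → ℝ := fun y => (-1) * (h y + q y) with hw
  have hwc : ContDiff ℝ 2 w := contDiff_const.mul (hh.add hqc)
  have hwh : ∀ y, f (hessianMatrix w y) = -t := fun y => by
    rw [hw, hess_smul (hh.add hqc).contDiffAt, hess_add hh.contDiffAt hqc.contDiffAt, map_smul, map_add, hh0, hqh]
    simp
  have hvc : ContDiff ℝ 2 (fun y => w (y + z)) := hwc.comp (contDiff_id.add contDiff_const)
  have hsub := hu.2.2 (fun y => w (y + z)) hvc.contDiffOn (fun x _ => by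
    refine dual_of_half hf1 hft (hess_symm hvc.contDiffAt) ?_
    rw [hess_shift, hwh])
  have hK : ∀ y, y ∈ eball (x0 - z) r → y + z ∈ eball x0 r := fun y hy => by
    have : qf (1 : Matrix (Fin m) (Fin m) ℝ) (y - (x0 - z)) ≤ r ^ 2 := hy
    show qf (1 : Matrix (Fin m) (Fin m) ℝ) (y + z - x0) ≤ r ^ 2
    rwa [show y + z - x0 = y - (x0 - z) by abel]
  have h1 := hsub (AffineMap.const ℝ _ M) (eball (x0 - z) r) (eball_compact _ hr)
    (fun y hy => by have := (hz _ (hK y hy)).1; rwa [add_sub_cancel_right] at this) (fun y hy => by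
      have hfr := frontier_le_subset_eq (qf1_cont (x0 - z)) (continuous_const (y := r ^ 2)) hy
      have hy' : y ∈ eball (x0 - z) r := le_of_eq hfr
      have h2 := (hz _ (hK y hy')).2
      rw [add_sub_cancel_right] at h2
      simp only [h2, AffineMap.const_apply]
      rw [← EReal.coe_add, EReal.coe_le_coe_iff]
      have h3 := hM (y + z) (by rw [← hfr]; congr 1; abel)
      rw [add_sub_cancel_right] at h3
      simp only [hw, hq]; linarith) (x0 - z) (eball_self _ _)
  have h2 := (hz x0 (eball_self _ _)).2
  simp only [h2, AffineMap.const_apply] at h1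
  rw [← EReal.coe_add, EReal.coe_le_coe_iff] at h1
  simp only [hw, hq, sub_add_cancel, sub_self, qf_one] at h1
  simp at h1
  linarith

/-- polynomials are dense in continuous functions on the ball -/
lemma poly_dense {m : ℕ} {K : Set (Fin m → ℝ)} (hK : IsCompact K) (φ : C(K, ℝ)) {ε : ℝ} (hε : 0 < ε) :
    ∃ p : MvPolynomial (Fin m) ℝ, ∀ y : K, |φ y - MvPolynomial.eval (y : Fin m → ℝ) p| < ε := by
  have : CompactSpace K := isCompact_iff_compactSpace.mp hK
  let X : Fin m → C(K, ℝ) := fun i => ⟨fun y => (y : Fin m → ℝ) i, (continuous_apply i).comp continuous_subtype_val⟩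
  have hev : ∀ (p : MvPolynomial (Fin m) ℝ) (y : K), (MvPolynomial.aeval X p : C(K, ℝ)) y = MvPolynomial.eval (y : Fin m → ℝ) p := by
    intro p y
    induction p using MvPolynomial.induction_on with
    | C a => simp
    | add p q hp hq => simp [hp, hq]
    | mul_X p i hp => simp [hp, X]
  obtain ⟨⟨g, hg⟩, hgn⟩ := ContinuousMap.exists_mem_subalgebra_near_continuousMap_of_separatesPoints
    (MvPolynomial.aeval (R := ℝ) X).range (by
      intro x y hxy
      obtain ⟨i, hi⟩ : ∃ i, (x : Fin m → ℝ) i ≠ (y : Fin m → ℝ) i := by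
        by_contra! h
        exact hxy (Subtype.ext (funext h))
      exact ⟨X i, ⟨X i, ⟨MvPolynomial.X i, by simp⟩, rfl⟩, hi⟩) φ ε hε
  obtain ⟨p, rfl⟩ := hg
  refine ⟨p, fun y => ?_⟩
  have := (ContinuousMap.norm_lt_iff _ hε).1 hgn y
  rw [← hev, abs_sub_comm]
  exact this

/-- The closed convex cone of continuous functions on the ball that are dominated at the centre. -/
def subC {m : ℕ} (f : Matrix (Fin m) (Fin m) ℝ →ₗ[ℝ] ℝ) (x0 : Fin m → ℝ) (r : ℝ) : Set C(eball x0 r, ℝ) :=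
  {φ | ∀ ε > 0, ∃ h : MvPolynomial (Fin m) ℝ, (∀ x, f (hessianMatrix (fun y => MvPolynomial.eval y h) x) = 0) ∧
    (∀ y : eball x0 r, qf (1 : Matrix (Fin m) (Fin m) ℝ) ((y : Fin m → ℝ) - x0) = r ^ 2 →
      |φ y - MvPolynomial.eval (y : Fin m → ℝ) h| ≤ ε) ∧ φ ⟨x0, eball_self x0 r⟩ ≤ MvPolynomial.eval x0 h + ε}

lemma subC_convex {m : ℕ} (f : Matrix (Fin m) (Fin m) ℝ →ₗ[ℝ] ℝ) (x0 : Fin m → ℝ) (r : ℝ) : Convex ℝ (subC f x0 r) := by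
  intro φ hφ ψ hψ a b ha hb hab ε hε
  obtain ⟨h, h1, h2, h3⟩ := hφ ε hε
  obtain ⟨k, k1, k2, k3⟩ := hψ ε hε
  refine ⟨MvPolynomial.C a * h + MvPolynomial.C b * k, fun x => ?_, fun y hy => ?_, ?_⟩
  · have : (fun y : Fin m → ℝ => MvPolynomial.eval y (MvPolynomial.C a * h + MvPolynomial.C b * k)) =
        fun y => a * MvPolynomial.eval y h + b * MvPolynomial.eval y k := by ext y; simp
    rw [this, hess_add (contDiff_const.mul (poly_contDiff h)).contDiffAt (contDiff_const.mul (poly_contDiff k)).contDiffAt,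
      hess_smul (poly_contDiff h).contDiffAt, hess_smul (poly_contDiff k).contDiffAt, map_add, map_smul, map_smul, h1, k1]
    simp
  · have e1 := abs_le.1 (h2 y hy)
    have e2 := abs_le.1 (k2 y hy)
    simp only [ContinuousMap.add_apply, ContinuousMap.smul_apply, smul_eq_mul, map_add, map_mul, MvPolynomial.eval_C]
    have hε' : ε = a * ε + b * ε := by rw [← add_mul, hab, one_mul]
    rw [abs_le]
    constructor <;> nlinarith
  · simp only [ContinuousMap.add_apply, ContinuousMap.smul_apply, smul_eq_mul, map_add, map_mul, MvPolynomial.eval_C]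
    have hε' : ε = a * ε + b * ε := by rw [← add_mul, hab, one_mul]
    nlinarith

lemma subC_closed {m : ℕ} (f : Matrix (Fin m) (Fin m) ℝ →ₗ[ℝ] ℝ) (x0 : Fin m → ℝ) {r : ℝ} (hr : 0 ≤ r) : IsClosed (subC f x0 r) := by
  have : CompactSpace (eball x0 r) := isCompact_iff_compactSpace.mp (eball_compact x0 hr)
  rw [← closure_subset_iff_isClosed]
  intro φ hφ ε hε
  obtain ⟨ψ, hψ, hd⟩ := Metric.mem_closure_iff.1 hφ (ε / 2) (by positivity)
  obtain ⟨h, h1, h2, h3⟩ := hψ (ε / 2) (by positivity)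
  have hpt : ∀ y, |φ y - ψ y| ≤ ε / 2 := fun y => by
    have := (ContinuousMap.dist_lt_iff (by positivity)).1 hd y
    rw [Real.dist_eq] at this; exact this.le
  refine ⟨h, h1, fun y hy => ?_, ?_⟩
  · have e1 := abs_le.1 (h2 y hy)
    have e2 := abs_le.1 (hpt y)
    rw [abs_le]; constructor <;> linarith [e1.1, e1.2, e2.1, e2.2]
  · have e2 := abs_le.1 (hpt ⟨x0, eball_self x0 r⟩)
    linarith [e2.2]

lemma mem_subC {m : ℕ} {F : Set (Matrix (Fin m) (Fin m) ℝ)} {U : Set (Fin m → ℝ)} {u : (Fin m → ℝ) → EReal}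
    (hu : IsTypeF F U u) {f : Matrix (Fin m) (Fin m) ℝ →ₗ[ℝ] ℝ} {t : ℝ} (hf : ∀ P, Psd P → 0 ≤ f P)
    (hf1 : 0 < f 1) (hft : ∀ B ∈ F, t ≤ f B)
    {g : (Fin m → ℝ) → ℝ} {x0 z : Fin m → ℝ} {r : ℝ} (hr : 0 < r)
    (hz : ∀ y ∈ eball x0 r, y - z ∈ U ∧ u (y - z) = ((g (y - z) : ℝ) : EReal)) (φ : C(eball x0 r, ℝ))
    (hφ : ∀ y, φ y = g ((y : Fin m → ℝ) - z) - t / (2 * f 1) * qf (1 : Matrix (Fin m) (Fin m) ℝ) ((y : Fin m → ℝ) - x0)) :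
    φ ∈ subC f x0 r := by
  intro ε hε
  obtain ⟨p, hp⟩ := poly_dense (eball_compact x0 hr.le) φ hε
  obtain ⟨h, h1, h2⟩ := dirichlet hf hf1 x0 hr p
  have h3 : ∀ y : eball x0 r, qf (1 : Matrix (Fin m) (Fin m) ℝ) ((y : Fin m → ℝ) - x0) = r ^ 2 →
      |φ y - MvPolynomial.eval (y : Fin m → ℝ) h| ≤ ε := fun y hy => by
    rw [h2 _ hy]; exact (hp y).le
  refine ⟨h, h1, h3, ?_⟩
  have := comparison hu hf1 hft hr.le hz (poly_contDiff h) h1 (M := ε) (fun y hy => by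
    have e := h3 ⟨y, le_of_eq hy⟩ hy
    rw [hφ] at e
    linarith [(abs_le.1 e).2])
  rw [hφ]
  simp only [sub_self, qf_one]
  simpa using this

lemma eball_subset {m : ℕ} (x0 : Fin m → ℝ) {r : ℝ} (hr : 0 ≤ r) {y : Fin m → ℝ} (hy : y ∈ eball x0 r) : dist y x0 ≤ r := by
  rw [dist_pi_le_iff hr]
  intro i
  rw [Real.dist_eq]
  refine abs_le_of_sq_le_sq ?_ hr
  refine le_trans ?_ hy
  rw [qf_one]
  exact Finset.single_le_sum (f := fun i => (y - x0) i ^ 2) (fun i _ => sq_nonneg _) (Finset.mem_univ i)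

/-- The mollification of `g` by a bump function. -/
noncomputable def moll {m : ℕ} (φ : ContDiffBump (0 : Fin m → ℝ)) (g : (Fin m → ℝ) → ℝ) : (Fin m → ℝ) → ℝ :=
  MeasureTheory.convolution (φ.normed MeasureTheory.volume) g (ContinuousLinearMap.lsmul ℝ ℝ) MeasureTheory.volume

lemma moll_apply {m : ℕ} (φ : ContDiffBump (0 : Fin m → ℝ)) (g : (Fin m → ℝ) → ℝ) (y : Fin m → ℝ) :
    moll φ g y = ∫ z, φ.normed MeasureTheory.volume z * g (y - z) := rfl

lemma moll_smooth {m : ℕ} (φ : ContDiffBump (0 : Fin m → ℝ)) {g : (Fin m → ℝ) → ℝ} (hg : Continuous g) :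
    ContDiff ℝ (⊤ : ℕ∞) (moll φ g) := by
  unfold moll
  exact φ.hasCompactSupport_normed.contDiff_convolution_left _ φ.contDiff_normed
    hg.locallyIntegrable

lemma moll_mem {m : ℕ} {F : Set (Matrix (Fin m) (Fin m) ℝ)} {U : Set (Fin m → ℝ)} {u : (Fin m → ℝ) → EReal}
    (hu : IsTypeF F U u) {f : Matrix (Fin m) (Fin m) ℝ →ₗ[ℝ] ℝ} {t : ℝ} (hf : ∀ P, Psd P → 0 ≤ f P)
    (hf1 : 0 < f 1) (hft : ∀ B ∈ F, t ≤ f B)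
    {g : (Fin m → ℝ) → ℝ} (hg : Continuous g) (φ : ContDiffBump (0 : Fin m → ℝ)) {x0 : Fin m → ℝ} {r : ℝ} (hr : 0 < r)
    (hball : ∀ y, dist y x0 ≤ φ.rOut + r → y ∈ U ∧ u y = ((g y : ℝ) : EReal)) :
    ∃ ψ ∈ subC f x0 r, ∀ y : eball x0 r,
      ψ y = moll φ g y - t / (2 * f 1) * qf (1 : Matrix (Fin m) (Fin m) ℝ) ((y : Fin m → ℝ) - x0) := by
  have hcs : CompactSpace (eball x0 r) := isCompact_iff_compactSpace.mp (eball_compact x0 hr.le)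
  set q : (Fin m → ℝ) → ℝ := fun y => t / (2 * f 1) * qf (1 : Matrix (Fin m) (Fin m) ℝ) (y - x0) with hq
  have hqc : Continuous q := continuous_const.mul (qf1_cont x0)
  obtain ⟨w, hw⟩ : ∃ w : C((Fin m → ℝ), C(eball x0 r, ℝ)), ∀ z y, w z y = g ((y : Fin m → ℝ) - z) - q y := by
    have h2 : Continuous fun p : (Fin m → ℝ) × eball x0 r => (p.2 : Fin m → ℝ) := continuous_subtype_val.comp continuous_snd
    exact ⟨(ContinuousMap.mk (fun p : (Fin m → ℝ) × eball x0 r => g ((p.2 : Fin m → ℝ) - p.1) - q p.2)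
      ((hg.comp (h2.sub continuous_fst)).sub (hqc.comp h2))).curry, fun z y => rfl⟩
  set d : (Fin m → ℝ) → ENNReal := fun z => ENNReal.ofReal (φ.normed MeasureTheory.volume z) with hd
  have hdm : Measurable d := ENNReal.measurable_ofReal.comp (φ.continuous_normed.measurable)
  set μ : MeasureTheory.Measure (Fin m → ℝ) := MeasureTheory.volume.withDensity d with hμ
  have hprob : MeasureTheory.IsProbabilityMeasure μ := by
    constructor
    rw [hμ, MeasureTheory.withDensity_apply _ MeasurableSet.univ, MeasureTheory.Measure.restrict_univ, hd,
      ← MeasureTheory.ofReal_integral_eq_lintegral_ofReal φ.integrable_normed (MeasureTheory.ae_of_all _ φ.nonneg_normed), φ.integral_normed,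
      ENNReal.ofReal_one]
  have hae : ∀ᵐ z ∂μ, z ∈ Metric.ball (0 : Fin m → ℝ) φ.rOut := by
    rw [hμ, MeasureTheory.ae_withDensity_iff hdm]
    refine MeasureTheory.ae_of_all _ fun z hz => ?_
    rw [← φ.support_normed_eq (μ := MeasureTheory.volume)]
    intro h0
    exact hz (by rw [hd]; simp [h0])
  have hmem : ∀ᵐ z ∂μ, w z ∈ subC f x0 r := by
    filter_upwards [hae] with z hz
    refine mem_subC hu hf hf1 hft hr (g := g) (z := z) (fun y hy => hball _ ?_) _ (fun y => hw z y)
    have h1 := eball_subset x0 hr.le hy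
    have h2 : dist (y - z) y ≤ φ.rOut := by
      rw [dist_eq_norm]; simp only [sub_sub_cancel_left, norm_neg]
      exact (mem_ball_zero_iff.1 hz).le
    linarith [dist_triangle (y - z) y x0]
  have h_integ : MeasureTheory.Integrable (fun z => w z) μ := by
    obtain ⟨C, hC⟩ := (isCompact_closedBall (0 : Fin m → ℝ) φ.rOut).exists_bound_of_continuousOn w.continuous.continuousOn
    refine MeasureTheory.Integrable.of_bound w.continuous.aestronglyMeasurable C ?_
    filter_upwards [hae] with z hz using hC z (Metric.ball_subset_closedBall hz)
  refine ⟨∫ z, w z ∂μ, (subC_convex f x0 r).integral_mem (subC_closed f x0 hr.le) hmem h_integ, fun y => ?_⟩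
  have h1 := (ContinuousMap.evalCLM ℝ y).integral_comp_comm h_integ
  have h2 : (∫ z, w z ∂μ) y = ∫ z, w z y ∂μ := h1.symm
  rw [h2]
  simp only [hw]
  have h_integ2 := (ContinuousMap.evalCLM ℝ y).integrable_comp h_integ
  have h_integ3 : MeasureTheory.Integrable (fun z => g ((y : Fin m → ℝ) - z)) μ := by
    have := h_integ2.add (MeasureTheory.integrable_const (q y))
    refine this.congr (MeasureTheory.ae_of_all _ fun z => ?_)
    show w z y + q y = _
    rw [hw]; ring
  rw [MeasureTheory.integral_sub h_integ3 (MeasureTheory.integrable_const _), MeasureTheory.integral_const, moll_apply,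
    hμ, integral_withDensity_eq_integral_toReal_smul hdm (MeasureTheory.ae_of_all _ fun z => ENNReal.ofReal_lt_top)]
  rw [← hμ]
  have : ∀ z, (d z).toReal = φ.normed MeasureTheory.volume z := fun z => ENNReal.toReal_ofReal (φ.nonneg_normed z)
  simp only [this, MeasureTheory.probReal_univ, one_smul, smul_eq_mul, hq]
  simp

lemma moll_hess {m : ℕ} {F : Set (Matrix (Fin m) (Fin m) ℝ)} {U : Set (Fin m → ℝ)} {u : (Fin m → ℝ) → EReal}
    (hu : IsTypeF F U u) {f : Matrix (Fin m) (Fin m) ℝ →ₗ[ℝ] ℝ} {t : ℝ} (hf : ∀ P, Psd P → 0 ≤ f P)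
    (hf1 : 0 < f 1) (hft : ∀ B ∈ F, t ≤ f B)
    {g : (Fin m → ℝ) → ℝ} (hg : Continuous g) (φ : ContDiffBump (0 : Fin m → ℝ)) {x0 : Fin m → ℝ} {ρ : ℝ} (hρ : 0 < ρ)
    (hball : ∀ y, dist y x0 ≤ φ.rOut + ρ → y ∈ U ∧ u y = ((g y : ℝ) : EReal)) :
    t ≤ f (hessianMatrix (moll φ g) x0) := by
  by_contra! hlt
  set W := moll φ g with hW
  have hWc : ContDiff ℝ 2 W := by exact_mod_cast contDiff_infty.1 (moll_smooth φ hg) 2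
  set s := f (hessianMatrix W x0) with hs
  set η := (t - s) / (4 * f 1) with hη
  have hη0 : 0 < η := div_pos (by linarith) (by linarith)
  set κ := η - t / (2 * f 1) with hκ
  set Q : (Fin m → ℝ) → ℝ := fun y => qf (1 : Matrix (Fin m) (Fin m) ℝ) (y - x0) with hQ
  have hQc : ContDiff ℝ 2 Q := qf_contDiff 1 x0
  set G : (Fin m → ℝ) → ℝ := fun y => W y + κ * Q y with hG
  have hGc : ContDiff ℝ 2 G := hWc.add (contDiff_const.mul hQc)
  have hG0 : f (hessianMatrix G x0) < 0 := by
    rw [hG, hess_add hWc.contDiffAt (contDiff_const.mul hQc).contDiffAt, hess_smul hQc.contDiffAt, hQ, hess_quad,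
      transpose_one, ← two_smul ℝ, map_add, map_smul, map_smul, smul_eq_mul, smul_eq_mul, ← hs, hκ, hη]
    have : s + ((t - s) / (4 * f 1) - t / (2 * f 1)) * (2 * f 1) = (s - t) / 2 := by field_simp; ring
    rw [this]; linarith
  have hcont : Continuous fun y => f (hessianMatrix G y) :=
    f.continuous_of_finiteDimensional.comp (hess_cont hGc)
  have hev : ∀ᶠ y in nhds x0, f (hessianMatrix G y) < 0 := hcont.continuousAt.eventually (gt_mem_nhds hG0)
  obtain ⟨δ, hδ, hδ'⟩ := Metric.eventually_nhds_iff.1 hev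
  set r := min ρ (δ / 2) with hr
  have hr0 : 0 < r := lt_min hρ (by linarith)
  have hrρ : r ≤ ρ := min_le_left _ _
  have hrδ : r < δ := lt_of_le_of_lt (min_le_right _ _) (by linarith)
  obtain ⟨ψ, hψ, hψe⟩ := moll_mem hu hf hf1 hft hg φ hr0 (x0 := x0) (fun y hy => hball y (by linarith))
  obtain ⟨h, h1, h2, h3⟩ := hψ (η * r ^ 2 / 4) (by positivity)
  have hhc : ContDiff ℝ 2 fun y => MvPolynomial.eval y h := poly_contDiff h
  have := max_principle hf hf1 (G := fun y => MvPolynomial.eval y h - G y) (hhc.sub hGc) (x0 := x0) hr0.le (fun y hy => by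
      rw [hess_sub hhc.contDiffAt hGc.contDiffAt, map_sub, h1]
      have := hδ' (lt_of_le_of_lt (eball_subset x0 hr0.le hy) hrδ)
      linarith) (M := η * r ^ 2 / 4 - η * r ^ 2) (fun y hy => by
      have e := (abs_le.1 (h2 ⟨y, le_of_eq hy⟩ hy)).1
      rw [hψe] at e
      simp only [hG, hQ, hy, hκ] at e ⊢
      linarith) x0 (eball_self _ _)
  rw [hψe] at h3
  simp only [hG, hQ, sub_self, qf_one] at this h3
  simp at this h3
  have : 0 < η * r ^ 2 := by positivity
  linarith

lemma eadd_le {x : EReal} {p v l : ℝ} (h : x ≤ (p : EReal)) (h' : p + v ≤ l) : x + (v : EReal) ≤ (l : EReal) := by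
  refine (add_le_add h le_rfl).trans ?_
  rw [← EReal.coe_add, EReal.coe_le_coe_iff]; exact h'

lemma seg_lemma {m : ℕ} {F : Set (Matrix (Fin m) (Fin m) ℝ)} (hF : GoodSet F) {U : Set (Fin m → ℝ)} (hU : IsOpen U)
    {u : (Fin m → ℝ) → EReal} (hu : IsTypeF F U u) {a ξ : Fin m → ℝ} (hξ : ξ ≠ 0)
    (hseg : ∀ s ∈ Set.Icc (0 : ℝ) 1, a + s • ξ ∈ U) {α β : ℝ} (hα : u a < (α : EReal)) (hβ : u (a + ξ) < (β : EReal)) :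
    ∀ s ∈ Set.Icc (0 : ℝ) 1, u (a + s • ξ) ≤ ((α + s * (β - α) : ℝ) : EReal) := by
  set e := ξ ⬝ᵥ ξ with he
  have he0 : 0 < e := by
    have h0 : 0 ≤ e := by
      rw [he, dotProduct]; exact Finset.sum_nonneg fun i _ => mul_self_nonneg _
    refine lt_of_le_of_ne h0 fun h => hξ ?_
    exact dotProduct_self_eq_zero.1 h.symm
  set N : Matrix (Fin m) (Fin m) ℝ := e • 1 - vecMulVec ξ ξ with hN
  have hNT : Nᵀ = N := by
    rw [hN, transpose_sub, transpose_smul, transpose_one, transpose_vecMulVec]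
  have hone : ∀ x : Fin m → ℝ, qf (1 : Matrix (Fin m) (Fin m) ℝ) x = x ⬝ᵥ x := fun x => by rw [qf, one_mulVec]
  have hNq : ∀ x, qf N x = e * (x ⬝ᵥ x) - (ξ ⬝ᵥ x) ^ 2 := fun x => by
    rw [hN, qf_sub, qf_smul, qf_vecMulVec, hone]
  set L : (Fin m → ℝ) → ℝ := fun y => ξ ⬝ᵥ (y - a) with hL
  have hLc : Continuous L := by
    simp only [hL, dotProduct]; fun_prop
  set Q : (Fin m → ℝ) → ℝ := fun y => qf N (y - a) with hQ
  have hQc : Continuous Q := (qf_contDiff (k := 0) N a).continuous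
  have key : ∀ y, e * qf (1 : Matrix (Fin m) (Fin m) ℝ) (y - (a + (L y / e) • ξ)) = Q y := fun y => by
    have h1 : y - (a + (L y / e) • ξ) = (y - a) - (L y / e) • ξ := by abel
    have h2 : ξ ⬝ᵥ (y - a) = L y := rfl
    have h3 : (y - a) ⬝ᵥ ξ = L y := by rw [dotProduct_comm]
    rw [h1, hone]
    have h4 : Q y = e * ((y - a) ⬝ᵥ (y - a)) - L y ^ 2 := hNq _
    rw [h4, dotProduct_sub, sub_dotProduct, sub_dotProduct (y - a), dotProduct_smul, smul_dotProduct, smul_dotProduct,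
      dotProduct_smul, h2, h3, ← he]
    simp only [smul_eq_mul]
    field_simp
    ring
  have hQ0 : ∀ y, 0 ≤ Q y := fun y => by
    rw [← key]; exact mul_nonneg he0.le (psd_one.2 _)
  have hQs : ∀ s : ℝ, Q (a + s • ξ) = 0 := fun s => by
    simp only [hQ, hNq, add_sub_cancel_left, dotProduct_smul, smul_dotProduct, smul_eq_mul, ← he]; ring
  have hLs : ∀ s : ℝ, L (a + s • ξ) = s * e := fun s => by
    simp only [hL, add_sub_cancel_left, dotProduct_smul, smul_eq_mul, ← he]
  -- the segment
  set S : Set (Fin m → ℝ) := (fun s : ℝ => a + s • ξ) '' Set.Icc 0 1 with hS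
  have hSc : IsCompact S := isCompact_Icc.image (by fun_prop)
  have hSU : S ⊆ U := by rintro _ ⟨s, hs, rfl⟩; exact hseg s hs
  obtain ⟨δ1, hδ1, hδU_one⟩ := hSc.exists_cthickening_subset_open hU hSU
  have haU : a ∈ U := by have := hseg 0 ⟨le_rfl, zero_le_one⟩; simpa using this
  have hbU : a + ξ ∈ U := by have := hseg 1 ⟨zero_le_one, le_rfl⟩; simpa using this
  have hea : ∀ᶠ y in nhds a, u y < (α : EReal) := by
    have := hu.2.1 a haU _ hα
    rwa [hU.nhdsWithin_eq haU] at this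
  have heb : ∀ᶠ y in nhds (a + ξ), u y < (β : EReal) := by
    have := hu.2.1 _ hbU _ hβ
    rwa [hU.nhdsWithin_eq hbU] at this
  obtain ⟨δ2, hδ2, h2⟩ := Metric.eventually_nhds_iff.1 hea
  obtain ⟨δ3, hδ3, h3⟩ := Metric.eventually_nhds_iff.1 heb
  obtain ⟨δ, hδ, hd1, hd2, hd3⟩ : ∃ δ > 0, δ ≤ δ1 ∧ δ < δ2 ∧ δ < δ3 :=
    ⟨min δ1 (min (δ2 / 2) (δ3 / 2)), lt_min hδ1 (lt_min (by linarith) (by linarith)), min_le_left _ _,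
      lt_of_le_of_lt ((min_le_right _ _).trans (min_le_left _ _)) (by linarith),
      lt_of_le_of_lt ((min_le_right _ _).trans (min_le_right _ _)) (by linarith)⟩
  set K : Set (Fin m → ℝ) := {y | 0 ≤ L y ∧ L y ≤ e ∧ Q y ≤ e * δ ^ 2} with hK
  have hKcl : IsClosed K := (isClosed_le continuous_const hLc).inter
    ((isClosed_le hLc continuous_const).inter (isClosed_le hQc continuous_const))
  have hKd : ∀ y ∈ K, dist y (a + (L y / e) • ξ) ≤ δ := fun y hy => by
    refine eball_subset _ hδ.le ?_
    have h4 := hy.2.2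
    rw [← key] at h4
    exact le_of_mul_le_mul_left h4 he0
  have hKt : K ⊆ Metric.cthickening δ1 S := fun y hy => by
    refine Metric.mem_cthickening_of_dist_le y (a + (L y / e) • ξ) δ1 S ⟨L y / e, ⟨?_, ?_⟩, rfl⟩ ((hKd y hy).trans hd1)
    · exact div_nonneg hy.1 he0.le
    · exact (div_le_one he0).2 hy.2.1
  have hKc : IsCompact K := hSc.cthickening.of_isClosed_subset hKcl hKt
  have hKU : K ⊆ U := hKt.trans hδU_one
  have hsK : ∀ s ∈ Set.Icc (0 : ℝ) 1, a + s • ξ ∈ K := fun s hs => by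
    refine ⟨?_, ?_, ?_⟩
    · rw [hLs]; exact mul_nonneg hs.1 he0.le
    · rw [hLs]; nlinarith [hs.2]
    · rw [hQs]; positivity
  obtain ⟨M, hM⟩ : ∃ M : ℝ, ∀ y ∈ K, u y ≤ (M : EReal) := by
    obtain ⟨y1, hy1, hmax⟩ := UpperSemicontinuousOn.exists_isMaxOn ⟨_, hsK 0 ⟨le_rfl, zero_le_one⟩⟩ hKc (hu.2.1.mono hKU)
    obtain ⟨M, hM, -⟩ := EReal.lt_iff_exists_real_btwn.1 (lt_top_iff_ne_top.2 (hu.1 y1 (hKU hy1)))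
    exact ⟨M, fun y hy => (hmax hy).trans hM.le⟩
  set μ := min α β with hμ
  set C := |M - μ| / (e * δ ^ 2) with hC
  have hC0 : 0 ≤ C := by positivity
  set v : (Fin m → ℝ) → ℝ := fun y => (-C) * Q y with hv
  have hvc : ContDiff ℝ 2 v := contDiff_const.mul (qf_contDiff N a)
  let f : Matrix (Fin m) (Fin m) ℝ →ₗ[ℝ] ℝ :=
    { toFun := fun A => qf A ξ, map_add' := fun A B => qf_add A B ξ, map_smul' := fun s A => qf_smul s A ξ }
  have hfd : ∀ A, f A = qf A ξ := fun A => rfl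
  have hsub := hu.2.2 v hvc.contDiffOn (fun x _ => by
    refine dual_of_half (f := f) (t := 0) ?_ (fun B hB => (hF.psd B hB).2 ξ) (hess_symm hvc.contDiffAt) ?_
    · rw [hfd, hone]; exact he0
    · rw [hv, hess_smul (qf_contDiff N a).contDiffAt, hess_quad, hNT, map_smul, map_add, hfd, hNq, ← he, smul_eq_mul]
      ring_nf; exact le_rfl)
  set κ := (β - α) / e with hκ
  let ℓ : (Fin m → ℝ) →ᵃ[ℝ] ℝ := ((∑ i, (κ * ξ i) • LinearMap.proj i : (Fin m → ℝ) →ₗ[ℝ] ℝ)).toAffineMap +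
    AffineMap.const ℝ _ (α - κ * (ξ ⬝ᵥ a))
  have hℓ : ∀ y, ℓ y = α + κ * L y := fun y => by
    have : ℓ y = (∑ i, (κ * ξ i) * y i) + (α - κ * (ξ ⬝ᵥ a)) := by
      simp [ℓ]
    rw [this]
    simp only [hL, dotProduct_sub]
    rw [show ∑ i, κ * ξ i * y i = κ * (ξ ⬝ᵥ y) by rw [dotProduct, Finset.mul_sum]; simp only [mul_assoc]]
    ring
  have hfin := hsub ℓ K hKc hKU (fun y hy => by
    have hyK : y ∈ K := hKcl.frontier_subset hy
    have hd := hKd y hyK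
    have hvn : v y ≤ 0 := by simp only [hv]; nlinarith [hQ0 y]
    have hcase : L y = 0 ∨ L y = e ∨ Q y = e * δ ^ 2 := by
      by_contra! hcon
      have h0 : 0 < L y := lt_of_le_of_ne hyK.1 (Ne.symm hcon.1)
      have h1 : L y < e := lt_of_le_of_ne hyK.2.1 hcon.2.1
      have h2 : Q y < e * δ ^ 2 := lt_of_le_of_ne hyK.2.2 hcon.2.2
      refine hy.2 (mem_interior_iff_mem_nhds.2 ?_)
      filter_upwards [hLc.continuousAt.eventually (lt_mem_nhds h0), hLc.continuousAt.eventually (gt_mem_nhds h1),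
        hQc.continuousAt.eventually (gt_mem_nhds h2)] with z z1 z2 z3 using ⟨z1.le, z2.le, z3.le⟩
    rw [hℓ]
    rcases hcase with h | h | h
    · rw [h] at hd ⊢
      simp only [zero_div, zero_smul, add_zero] at hd
      exact eadd_le (h2 (lt_of_le_of_lt hd hd2)).le (by linarith)
    · rw [h] at hd ⊢
      rw [div_self he0.ne', one_smul] at hd
      refine eadd_le (h3 (lt_of_le_of_lt hd hd3)).le ?_
      rw [hκ, div_mul_cancel₀ _ he0.ne']; linarith
    · refine eadd_le (hM y hyK) ?_
      have hv2 : v y = -|M - μ| := by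
        simp only [hv, h, hC]; field_simp
      have hlow : μ ≤ α + κ * L y := by
        have ht0 : 0 ≤ L y / e := div_nonneg hyK.1 he0.le
        have ht1 : L y / e ≤ 1 := (div_le_one he0).2 hyK.2.1
        have : κ * L y = (β - α) * (L y / e) := by rw [hκ]; ring
        rw [this]
        have m1 : μ ≤ α := min_le_left _ _
        have m2 : μ ≤ β := min_le_right _ _
        nlinarith
      rw [hv2]
      linarith [le_abs_self (M - μ)])
  intro s hs
  have h5 := hfin _ (hsK s hs)
  simp only [hv, hQs, hℓ, hLs] at h5
  rw [mul_zero, EReal.coe_zero, add_zero] at h5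
  rw [show s * (β - α) = κ * (s * e) by rw [hκ]; field_simp]
  exact h5

lemma ball_seg {m : ℕ} {x1 a b : Fin m → ℝ} {δ : ℝ} (ha : a ∈ Metric.ball x1 δ) (hb : b ∈ Metric.ball x1 δ) {s : ℝ}
    (hs : s ∈ Set.Icc (0 : ℝ) 1) : a + s • (b - a) ∈ Metric.ball x1 δ :=
  (convex_ball x1 δ).add_smul_sub_mem ha hb hs

lemma bot_ball {m : ℕ} {F : Set (Matrix (Fin m) (Fin m) ℝ)} (hF : GoodSet F) {U : Set (Fin m → ℝ)} (hU : IsOpen U)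
    {u : (Fin m → ℝ) → EReal} (hu : IsTypeF F U u) {x1 : Fin m → ℝ} {δ : ℝ} (hball : Metric.ball x1 δ ⊆ U)
    {a x : Fin m → ℝ} (ha : a ∈ Metric.ball x1 δ) (hx : x ∈ Metric.ball x1 δ) (hbot : u a = ⊥) : u x = ⊥ := by
  by_cases hax : x = a
  · rw [hax, hbot]
  obtain ⟨τ, hτ, hτb⟩ : ∃ τ : ℝ, 0 < τ ∧ a + (1 + τ) • (x - a) ∈ Metric.ball x1 δ := by
    have hc : Continuous fun τ : ℝ => a + (1 + τ) • (x - a) := by fun_prop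
    have h0 : a + (1 + (0:ℝ)) • (x - a) ∈ Metric.ball x1 δ := by simpa using hx
    have h1 := hc.continuousAt.eventually (Metric.isOpen_ball.mem_nhds h0)
    obtain ⟨ε, hε, h2⟩ := Metric.eventually_nhds_iff.1 h1
    refine ⟨ε / 2, by linarith, h2 ?_⟩
    rw [Real.dist_eq, sub_zero, abs_of_pos] <;> linarith
  set ξ := (1 + τ) • (x - a) with hξ
  have hξ0 : ξ ≠ 0 := smul_ne_zero (by linarith) (sub_ne_zero.2 hax)
  set s := 1 / (1 + τ) with hs
  have hs0 : 0 ≤ s := by positivity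
  have hs1 : s < 1 := by rw [hs, div_lt_one] <;> linarith
  have hxs : a + s • ξ = x := by
    rw [hξ, smul_smul, hs, one_div, inv_mul_cancel₀ (by linarith), one_smul]; abel
  have hbU := hball hτb
  obtain ⟨β, hβ, -⟩ := EReal.lt_iff_exists_real_btwn.1 (lt_top_iff_ne_top.2 (hu.1 _ hbU))
  by_contra hne
  obtain ⟨r, hr⟩ : ∃ r : ℝ, u x = (r : EReal) := ⟨(u x).toReal, (EReal.coe_toReal (hu.1 x (hball hx)) hne).symm⟩
  have := seg_lemma hF hU hu (a := a) (ξ := ξ) hξ0 (fun s' hs' => by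
    have := ball_seg ha hτb hs'
    rw [add_sub_cancel_left] at this
    exact hball this) (α := (r - 1 - s * β) / (1 - s)) (β := β) (by rw [hbot]; exact EReal.bot_lt_coe _) hβ s ⟨hs0, hs1.le⟩
  rw [hxs, hr, EReal.coe_le_coe_iff] at this
  have h3 : (r - 1 - s * β) / (1 - s) + s * (β - (r - 1 - s * β) / (1 - s)) = r - 1 := by
    have : 1 - s ≠ 0 := by linarith
    field_simp; ring
  rw [h3] at this; linarith

lemma dichotomy {m : ℕ} {F : Set (Matrix (Fin m) (Fin m) ℝ)} (hF : GoodSet F) {U : Set (Fin m → ℝ)} (hU : IsOpen U)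
    (hUc : IsPreconnected U) {u : (Fin m → ℝ) → EReal} (hu : IsTypeF F U u) :
    (∀ x ∈ U, u x = ⊥) ∨ ∀ x ∈ U, u x ≠ ⊥ := by
  have h1 : IsOpen {x | x ∈ U ∧ u x = ⊥} := by
    rw [Metric.isOpen_iff]
    rintro x ⟨hx, hb⟩
    obtain ⟨δ, hδ, hball⟩ := Metric.isOpen_iff.1 hU x hx
    exact ⟨δ, hδ, fun y hy => ⟨hball hy, bot_ball hF hU hu hball (Metric.mem_ball_self hδ) hy hb⟩⟩
  have h2 : IsOpen {x | x ∈ U ∧ u x ≠ ⊥} := by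
    rw [Metric.isOpen_iff]
    rintro x ⟨hx, hb⟩
    obtain ⟨δ, hδ, hball⟩ := Metric.isOpen_iff.1 hU x hx
    exact ⟨δ, hδ, fun y hy => ⟨hball hy, fun h => hb (bot_ball hF hU hu hball hy (Metric.mem_ball_self hδ) h)⟩⟩
  rcases IsPreconnected.subset_or_subset h1 h2 (Set.disjoint_left.2 fun x hx hx' => hx'.2 hx.2)
    (fun x hx => by by_cases h : u x = ⊥ <;> [left; right] <;> exact ⟨hx, h⟩) hUc with h | h
  · exact Or.inl fun x hx => (h hx).2
  · exact Or.inr fun x hx => (h hx).2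

lemma cont_of_finite {m : ℕ} {F : Set (Matrix (Fin m) (Fin m) ℝ)} (hF : GoodSet F) {U : Set (Fin m → ℝ)} (hU : IsOpen U)
    {u : (Fin m → ℝ) → EReal} (hu : IsTypeF F U u) (hfin : ∀ x ∈ U, u x ≠ ⊥) :
    ContinuousOn (fun y => (u y).toReal) U := by
  have hco : ∀ x ∈ U, u x = (((u x).toReal : ℝ) : EReal) := fun x hx => (EReal.coe_toReal (hu.1 x hx) (hfin x hx)).symm
  intro x hx
  obtain ⟨δ, hδ, hball⟩ := Metric.isOpen_iff.1 hU x hx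
  have hconv : ConvexOn ℝ (Metric.ball x δ) (fun y => (u y).toReal) := by
    refine ⟨convex_ball x δ, fun y hy z hz a b ha hb hab => ?_⟩
    have hy' := hco y (hball hy)
    have hz' := hco z (hball hz)
    have hw' := hco _ (hball ((convex_ball x δ) hy hz ha hb hab))
    by_cases hyz : z = y
    · subst hyz
      rw [← add_smul, hab, one_smul]
      simp only [smul_eq_mul]; rw [← add_mul, hab, one_mul]
    refine le_of_forall_pos_le_add fun ε hε => ?_
    have hpt : a • y + b • z = y + b • (z - y) := by
      rw [show a = 1 - b by linarith, sub_smul, one_smul, smul_sub]; abel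
    have := seg_lemma hF hU hu (a := y) (ξ := z - y) (sub_ne_zero.2 hyz) (fun s hs => hball (ball_seg hy hz hs))
      (α := (u y).toReal + ε) (β := (u z).toReal + ε)
      (by rw [hy', EReal.coe_lt_coe_iff, EReal.toReal_coe]; linarith)
      (by rw [add_sub_cancel, hz', EReal.coe_lt_coe_iff, EReal.toReal_coe]; linarith) b ⟨hb, by linarith⟩
    rw [← hpt, hw', EReal.coe_le_coe_iff] at this
    refine this.trans (le_of_eq ?_)
    simp only [smul_eq_mul]
    rw [show a = 1 - b by linarith]; ring
  exact ((hconv.continuousOn Metric.isOpen_ball).continuousAt (Metric.ball_mem_nhds x hδ)).continuousWithinAt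

lemma hess_const {m : ℕ} (c : ℝ) (x : Fin m → ℝ) : hessianMatrix (fun _ : Fin m → ℝ => c) x = 0 :=
  (hess_affine (AffineMap.const ℝ (Fin m → ℝ) c)).2 x

lemma hess_add_const {m : ℕ} {W : (Fin m → ℝ) → ℝ} (hW : ContDiff ℝ 2 W) (c : ℝ) (x : Fin m → ℝ) :
    hessianMatrix (fun y => W y + c) x = hessianMatrix W x := by
  rw [hess_add hW.contDiffAt contDiff_const.contDiffAt, hess_const, add_zero]

lemma approx_bot {m : ℕ} {F : Set (Matrix (Fin m) (Fin m) ℝ)} (hF : GoodSet F) {V : Set (Fin m → ℝ)} (hV : IsOpen V)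
    {u : (Fin m → ℝ) → EReal} (hu : ∀ x ∈ V, u x = ⊥) :
    ∃ uk : ℕ → (Fin m → ℝ) → ℝ, (∀ k, ContDiffOn ℝ (⊤ : ℕ∞) (uk k) V) ∧ (∀ k, IsTypeF F V (fun y => ((uk k y : ℝ) : EReal))) ∧
      (∀ k, ∀ y ∈ V, uk (k+1) y < uk k y) ∧ (∀ y ∈ V, Tendsto (fun k => ((uk k y : ℝ) : EReal)) atTop (nhds (u y))) := by
  obtain ⟨C, hC, hCF⟩ := hF.ne
  set W : (Fin m → ℝ) → ℝ := fun y => C / 2 * qf (1 : Matrix (Fin m) (Fin m) ℝ) (y - 0) with hW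
  have hWc : ∀ k : WithTop ℕ∞, ContDiff ℝ k W := fun k => contDiff_const.mul (qf_contDiff 1 0)
  refine ⟨fun k y => W y + -(k : ℝ), fun k => ((hWc _).add contDiff_const).contDiffOn, fun k => ?_, fun k y _ => ?_, fun y hy => ?_⟩
  · refine typeF_of_hess hF hV ((hWc 2).add contDiff_const).contDiffOn fun x _ => ?_
    rw [hess_add_const (hWc 2), hW, hess_smul (qf_contDiff 1 0).contDiffAt, hess_quad, transpose_one, ← two_smul ℝ, smul_smul,
      div_mul_cancel₀ _ two_ne_zero]
    exact hCF
  · push_cast; linarith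
  · rw [hu y hy, EReal.tendsto_nhds_bot_iff_real]
    intro r
    obtain ⟨N, hN⟩ := exists_nat_gt (W y - r)
    filter_upwards [eventually_ge_atTop N] with k hk
    rw [EReal.coe_lt_coe_iff]
    have : (N : ℝ) ≤ k := by exact_mod_cast hk
    linarith

lemma approx_fin {m : ℕ} {F : Set (Matrix (Fin m) (Fin m) ℝ)} (hF : GoodSet F) {U : Set (Fin m → ℝ)} (hU : IsOpen U)
    {u : (Fin m → ℝ) → EReal} (hu : IsTypeF F U u) (hfin : ∀ x ∈ U, u x ≠ ⊥) {V K : Set (Fin m → ℝ)} (hV : IsOpen V)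
    (hK : IsCompact K) (hVK : V ⊆ K) (hKU : K ⊆ U) :
    ∃ uk : ℕ → (Fin m → ℝ) → ℝ, (∀ k, ContDiffOn ℝ (⊤ : ℕ∞) (uk k) V) ∧ (∀ k, IsTypeF F V (fun y => ((uk k y : ℝ) : EReal))) ∧
      (∀ k, ∀ y ∈ V, uk (k+1) y < uk k y) ∧ (∀ y ∈ V, Tendsto (fun k => ((uk k y : ℝ) : EReal)) atTop (nhds (u y))) := by
  obtain ⟨δ0, hδ0, hδU⟩ := hK.exists_cthickening_subset_open hU hKU
  set K2 := Metric.cthickening δ0 K with hK2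
  have hK2c : IsCompact K2 := hK.cthickening
  have hnear : ∀ x ∈ K, ∀ y, dist y x ≤ δ0 → y ∈ K2 := fun x hx y hy => Metric.mem_cthickening_of_dist_le y x δ0 K hx hy
  have hcont := (cont_of_finite hF hU hu hfin).mono hδU
  obtain ⟨g, hg⟩ := ContinuousMap.exists_restrict_eq hK2c.isClosed
    (⟨K2.restrict fun y => (u y).toReal, hcont.restrict⟩ : C(K2, ℝ))
  have hgu : ∀ y ∈ K2, u y = ((g y : ℝ) : EReal) := fun y hy => by
    have h1 : g y = (u y).toReal := DFunLike.congr_fun hg ⟨y, hy⟩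
    rw [h1, EReal.coe_toReal (hu.1 y (hδU hy)) (hfin y (hδU hy))]
  have huc := hK2c.uniformContinuousOn_of_continuous g.continuous.continuousOn
  rw [Metric.uniformContinuousOn_iff] at huc
  have hex : ∀ k : ℕ, ∃ φ : ContDiffBump (0 : Fin m → ℝ), φ.rOut ≤ δ0 / 2 ∧
      ∀ x ∈ K, |moll φ g x - g x| ≤ (1 / 2 : ℝ) ^ k / 8 := fun k => by
    obtain ⟨δ, hδ, hδ'⟩ := huc ((1 / 2 : ℝ) ^ k / 8) (by positivity)
    have hr : 0 < min δ (δ0 / 2) := lt_min hδ (by linarith)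
    refine ⟨⟨min δ (δ0 / 2) / 2, min δ (δ0 / 2), by linarith, by linarith⟩, min_le_right _ _, fun x hx => ?_⟩
    rw [← Real.dist_eq]
    refine ContDiffBump.dist_normed_convolution_le g.continuous.aestronglyMeasurable fun y hy => ?_
    have h1 : dist y x < min δ (δ0 / 2) := hy
    refine (hδ' y (hnear x hx y ?_) x (hnear x hx x ?_) (lt_of_lt_of_le h1 (min_le_left _ _))).le
    · linarith [min_le_right δ (δ0 / 2)]
    · rw [dist_self]; exact hδ0.le
  choose φ hφ1 hφ2 using hex
  have hWc : ∀ k, ContDiff ℝ (⊤ : ℕ∞) (moll (φ k) g) := fun k => moll_smooth (φ k) g.continuous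
  have hWc2 : ∀ k, ContDiff ℝ 2 (moll (φ k) g) := fun k => by exact_mod_cast contDiff_infty.1 (hWc k) 2
  have hWF : ∀ k, ∀ x ∈ K, hessianMatrix (moll (φ k) g) x ∈ F := fun k x hx => by
    by_contra hnot
    obtain ⟨f, t, h1, h2, h3, h4⟩ := sep_lemma hF (hess_symm (hWc2 k).contDiffAt) hnot
    have := moll_hess hu h1 h2 h3 g.continuous (φ k) (x0 := x) (ρ := δ0 / 2) (by linarith) (fun y hy => by
      have hy2 := hnear x hx y (by linarith [hφ1 k])
      exact ⟨hδU hy2, hgu y hy2⟩)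
    linarith
  refine ⟨fun k y => moll (φ k) g y + (1 / 2 : ℝ) ^ k, fun k => ((hWc k).add contDiff_const).contDiffOn, fun k => ?_,
    fun k y hy => ?_, fun y hy => ?_⟩
  · refine typeF_of_hess hF hV ((hWc2 k).add contDiff_const).contDiffOn fun x hx => ?_
    rw [hess_add_const (hWc2 k)]
    exact hWF k x (hVK hx)
  · have h1 := abs_le.1 (hφ2 k y (hVK hy))
    have h2 := abs_le.1 (hφ2 (k+1) y (hVK hy))
    have h3 : (0:ℝ) < (1/2)^k := by positivity
    beta_reduce
    rw [pow_succ] at h2 ⊢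
    linarith [h1.1, h2.2]
  · rw [hgu y (hnear y (hVK hy) y (by rw [dist_self]; exact hδ0.le))]
    refine (continuous_coe_real_ereal.tendsto (g y)).comp ?_
    rw [tendsto_iff_dist_tendsto_zero]
    have hz : Tendsto (fun k : ℕ => 2 * (1 / 2 : ℝ) ^ k) atTop (nhds 0) := by
      simpa using (tendsto_pow_atTop_nhds_zero_of_lt_one (r := (1/2 : ℝ)) (by norm_num) (by norm_num)).const_mul 2
    refine squeeze_zero (fun _ => dist_nonneg) (fun k => ?_) hz
    have h1 := abs_le.1 (hφ2 k y (hVK hy))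
    have h3 : (0:ℝ) < (1/2)^k := by positivity
    rw [Real.dist_eq, abs_le]
    constructor <;> linarith [h1.1, h1.2]

theorem smooth_approximation' (n : ℕ) (c : ℝ)
    (hc : (n : ℝ) * π / 2 ≤ c) (hc' : c < ((n : ℝ) + 1) * π / 2)
    (I : Set ℝ) (hIopen : IsOpen I) (hIconv : Convex ℝ I)
    (D : Set (Fin n → ℝ)) (hDopen : IsOpen D) (hDconn : IsConnected D)
    (u : (Fin (n+1) → ℝ) → EReal)
    (hu : IsTypeF (calF n c) {y | y 0 ∈ I ∧ Fin.tail y ∈ D} u)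
    (I' : Set ℝ) (hI'open : IsOpen I') (hI'cpt : IsCompact (closure I'))
    (hI'sub : closure I' ⊆ I)
    (D' : Set (Fin n → ℝ)) (hD'open : IsOpen D') (hD'cpt : IsCompact (closure D'))
    (hD'sub : closure D' ⊆ D) :
    ∃ uk : ℕ → (Fin (n+1) → ℝ) → ℝ,
      (∀ k, ContDiffOn ℝ (⊤ : ℕ∞) (uk k) {y | y 0 ∈ I' ∧ Fin.tail y ∈ D'}) ∧
      (∀ k, IsTypeF (calF n c) {y | y 0 ∈ I' ∧ Fin.tail y ∈ D'}
        (fun y => ((uk k y : ℝ) : EReal))) ∧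
      (∀ k, ∀ y ∈ {y : Fin (n+1) → ℝ | y 0 ∈ I' ∧ Fin.tail y ∈ D'},
        uk (k+1) y < uk k y) ∧
      (∀ y ∈ {y : Fin (n+1) → ℝ | y 0 ∈ I' ∧ Fin.tail y ∈ D'},
        Filter.Tendsto (fun k => ((uk k y : ℝ) : EReal)) Filter.atTop (nhds (u y))) := by
  have hF := calF_good hc hc'
  have h0c : Continuous fun y : Fin (n+1) → ℝ => y 0 := continuous_apply 0
  have htc : Continuous fun y : Fin (n+1) → ℝ => (Fin.tail y : Fin n → ℝ) := continuous_id.finTail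
  have hop : ∀ (A : Set ℝ) (B : Set (Fin n → ℝ)), IsOpen A → IsOpen B → IsOpen {y : Fin (n+1) → ℝ | y 0 ∈ A ∧ Fin.tail y ∈ B} :=
    fun A B hA hB => (hA.preimage h0c).inter (hB.preimage htc)
  have hcc : Continuous fun p : ℝ × (Fin n → ℝ) => (Fin.cons p.1 p.2 : Fin (n+1) → ℝ) :=
    Continuous.finCons (A := fun _ => ℝ) continuous_fst continuous_snd
  have him : ∀ (A : Set ℝ) (B : Set (Fin n → ℝ)), {y : Fin (n+1) → ℝ | y 0 ∈ A ∧ Fin.tail y ∈ B} =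
      (fun p : ℝ × (Fin n → ℝ) => (Fin.cons p.1 p.2 : Fin (n+1) → ℝ)) '' (A ×ˢ B) := fun A B => by
    ext y
    constructor
    · rintro ⟨h1, h2⟩
      exact ⟨(y 0, Fin.tail y), ⟨h1, h2⟩, Fin.cons_self_tail y⟩
    · rintro ⟨p, ⟨h1, h2⟩, rfl⟩
      exact ⟨by simpa using h1, by simpa using h2⟩
  have hUo := hop I D hIopen hDopen
  have hVo := hop I' D' hI'open hD'open
  have hUc : IsPreconnected {y : Fin (n+1) → ℝ | y 0 ∈ I ∧ Fin.tail y ∈ D} := by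
    rw [him]
    exact (hIconv.isPreconnected.prod hDconn.isPreconnected).image _ hcc.continuousOn
  have hK : IsCompact {y : Fin (n+1) → ℝ | y 0 ∈ closure I' ∧ Fin.tail y ∈ closure D'} := by
    rw [him]
    exact (hI'cpt.prod hD'cpt).image hcc
  have hVK : {y : Fin (n+1) → ℝ | y 0 ∈ I' ∧ Fin.tail y ∈ D'} ⊆ {y : Fin (n+1) → ℝ | y 0 ∈ closure I' ∧ Fin.tail y ∈ closure D'} :=
    fun y hy => ⟨subset_closure hy.1, subset_closure hy.2⟩
  have hKU : {y : Fin (n+1) → ℝ | y 0 ∈ closure I' ∧ Fin.tail y ∈ closure D'} ⊆ {y : Fin (n+1) → ℝ | y 0 ∈ I ∧ Fin.tail y ∈ D} :=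
    fun y hy => ⟨hI'sub hy.1, hD'sub hy.2⟩
  rcases dichotomy hF hUo hUc hu with h | h
  · exact approx_bot hF hVo fun x hx => h x (hKU (hVK hx))
  · exact approx_fin hF hUo hu h hVo hK hVK hKU

/-- **Smooth approximation.**  Let `c ∈ [nπ/2, (n+1)π/2)`, `D ⊂ ℝⁿ` a bounded domain,
`I ⊂ ℝ` an open interval, and `u ∈ ℱ_c(I × D)`.  Then for all precompact open subsets
`I' ⊂ I` and `D' ⊂ D` there is a sequence of smooth functions on `I' × D'`, each of type
`ℱ_c(I' × D')`, strictly decreasing and converging pointwise to `u` on `I' × D'`. -/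
theorem smooth_approximation (n : ℕ) (c : ℝ)
    (hc : (n : ℝ) * π / 2 ≤ c) (hc' : c < ((n : ℝ) + 1) * π / 2)
    (I : Set ℝ) (hIopen : IsOpen I) (hIconv : Convex ℝ I) (hIne : I.Nonempty)
    (D : Set (Fin n → ℝ)) (hDopen : IsOpen D) (hDconn : IsConnected D)
    (hDbdd : Bornology.IsBounded D)
    (u : (Fin (n+1) → ℝ) → EReal)
    (hu : IsTypeF (calF n c) {y | y 0 ∈ I ∧ Fin.tail y ∈ D} u)
    (I' : Set ℝ) (hI'open : IsOpen I') (hI'cpt : IsCompact (closure I'))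
    (hI'sub : closure I' ⊆ I)
    (D' : Set (Fin n → ℝ)) (hD'open : IsOpen D') (hD'cpt : IsCompact (closure D'))
    (hD'sub : closure D' ⊆ D) :
    ∃ uk : ℕ → (Fin (n+1) → ℝ) → ℝ,
      (∀ k, ContDiffOn ℝ (⊤ : ℕ∞) (uk k) {y | y 0 ∈ I' ∧ Fin.tail y ∈ D'}) ∧
      (∀ k, IsTypeF (calF n c) {y | y 0 ∈ I' ∧ Fin.tail y ∈ D'}
        (fun y => ((uk k y : ℝ) : EReal))) ∧
      (∀ k, ∀ y ∈ {y : Fin (n+1) → ℝ | y 0 ∈ I' ∧ Fin.tail y ∈ D'},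
        uk (k+1) y < uk k y) ∧
      (∀ y ∈ {y : Fin (n+1) → ℝ | y 0 ∈ I' ∧ Fin.tail y ∈ D'},
        Filter.Tendsto (fun k => ((uk k y : ℝ) : EReal)) Filter.atTop (nhds (u y))) := by
  exact smooth_approximation' n c hc hc' I hIopen hIconv D hDopen hDconn u hu I' hI'open hI'cpt hI'sub D' hD'open
    hD'cpt hD'sub
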